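/- arXiv:1612.03229 — 8 statements merged into one kernel-verified Lean document; each statement's English description precedes it below -/
import Mathlib

section
/- Let O be an order in an imaginary quadratic field and let N be a positive integer with prime factorization N = ∏_{i=1}^r ℓ_i^{a_i}. Then the cardinality of the mod N Cartan subgroup is #C_N(O) = ∏_{i=1}^r ℓ_i^{2a_i−2}·(ℓ_i − 1)·(ℓ_i − χ(ℓ_i)), where χ(ℓ) = 1 if ℓ is split in O, χ(ℓ) = 0 if ℓ is ramified in O, and χ(ℓ) = −1 if ℓ is inert in O. -/
set_option synthInstance.maxHeartbeats 1000000
set_option maxHeartbeats 1000000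

open NumberField

/-- `K` is an imaginary quadratic field: a number field of degree `2` over `ℚ`
with no real embedding. -/
def IsImagQuadratic (K : Type*) [Field K] [NumberField K] : Prop :=
  Module.finrank ℚ K = 2 ∧ IsEmpty (K →+* ℝ)

/-- `O = ℤ + f·𝓞_K` is the order of conductor `f` in the number field `K`,
viewed as a subalgebra of `K`. -/
def IsOrderOfConductor (K : Type*) [Field K] [NumberField K] (f : ℕ)
    (O : Subalgebra ℤ K) : Prop :=
  ∀ x : K, x ∈ O ↔ ∃ (a : ℤ) (y : 𝓞 K), x = (a : K) + (f : K) * (algebraMap (𝓞 K) K y)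

/-- The prime `ℓ` is *split* in the ring `R`: `R/ℓR ≅ ℤ/ℓ × ℤ/ℓ` as rings. -/
def SplitsIn (R : Type*) [CommRing R] (ℓ : ℕ) : Prop :=
  Nonempty ((R ⧸ Ideal.span {(ℓ : R)}) ≃+* ZMod ℓ × ZMod ℓ)

/-- The prime `ℓ` is *inert* in the ring `R`: `R/ℓR` is a field. -/
def InertIn (R : Type*) [CommRing R] (ℓ : ℕ) : Prop :=
  IsField (R ⧸ Ideal.span {(ℓ : R)})

/-!
All that matters about the order is that it is a commutative ring `R` free of rank `2` over `ℤ`.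
Write `N = ∏ p ^ a`. By the Chinese remainder theorem `(R/N)ˣ` is the product of the groups
`(R/p^a)ˣ`. The kernel of `R/p^a → R/p` is nilpotent with `p ^ (2 * a - 2)` elements, so units lift
along it and every unit of `R/p` has that many lifts. This leaves `R/p`, a ring with `p ^ 2`
elements: two distinct maximal ideals split it as `ZMod p × ZMod p`; otherwise it is local, hence
a field or a local ring whose maximal ideal and residue field both have `p` elements.
-/

section Units

variable {A : Type*} [CommRing A]

theorem natCard_units_of_isNilpotent {I : Ideal A} (hI : IsNilpotent I) :
    Nat.card Aˣ = Nat.card I * Nat.card (A ⧸ I)ˣ := by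
  have units_eq_preimage : (IsUnit.submonoid A : Set A) =
      QuotientAddGroup.mk (s := I.toAddSubgroup) ⁻¹' (IsUnit.submonoid (A ⧸ I) : Set (A ⧸ I)) :=
    Set.ext fun _ ↦ hI.isUnit_quotient_mk_iff.symm
  rw [Nat.card_congr Submonoid.unitsTypeEquivIsUnitSubmonoid.toEquiv,
    Nat.card_congr (Submonoid.unitsTypeEquivIsUnitSubmonoid (M := A ⧸ I)).toEquiv, ← Nat.card_prod]
  exact Nat.card_congr <| (Equiv.setCongr units_eq_preimage).trans <|
    QuotientAddGroup.preimageMkEquivAddSubgroupProdSet I.toAddSubgroup _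

theorem natCard_units_of_isField (hA : IsField A) : Nat.card Aˣ = Nat.card A - 1 :=
  letI := hA.toField
  Nat.card_units A

theorem natCard_units_of_isLocalRing [IsLocalRing A] [IsArtinianRing A] :
    Nat.card Aˣ = Nat.card (IsLocalRing.maximalIdeal A) *
      (Nat.card (A ⧸ IsLocalRing.maximalIdeal A) - 1) := by
  have maximalIdeal_nilpotent : IsNilpotent (IsLocalRing.maximalIdeal A) := by
    rw [← IsLocalRing.jacobson_eq_maximalIdeal ⊥ bot_ne_top]
    exact IsArtinianRing.isNilpotent_jacobson_bot
  rw [natCard_units_of_isNilpotent maximalIdeal_nilpotent, natCard_units_of_isField <|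
    (Ideal.Quotient.maximal_ideal_iff_isField_quotient _).mp inferInstance]

theorem natCard_units_eq_mul_of_ringEquiv_prod {B C : Type*} [CommRing B] [CommRing C]
    (e : A ≃+* B × C) : Nat.card Aˣ = Nat.card Bˣ * Nat.card Cˣ := by
  rw [← Nat.card_prod]
  exact Nat.card_congr ((Units.mapEquiv e.toMulEquiv).trans MulEquiv.prodUnits).toEquiv

end Units

section CardPrimeSq

variable {A : Type*} [CommRing A] {p : ℕ}

theorem natCard_ideal_and_quotient_of_natCard_eq_prime_sq (hp : p.Prime) (hA : Nat.card A = p ^ 2)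
    {I : Ideal A} (hbot : I ≠ ⊥) (htop : I ≠ ⊤) :
    Nat.card I = p ∧ Nat.card (A ⧸ I) = p := by
  have card_ideal_ne_one : Nat.card I ≠ 1 := fun h ↦
    hbot <| Submodule.subsingleton_iff_eq_bot.mp (Nat.card_eq_one_iff_unique.mp h).1
  have card_quotient_ne_one : Nat.card (A ⧸ I) ≠ 1 := fun h ↦
    htop <| Ideal.Quotient.subsingleton_iff.mp (Nat.card_eq_one_iff_unique.mp h).1
  refine (hp.mul_eq_prime_sq_iff card_ideal_ne_one card_quotient_ne_one).mp ?_
  rw [← hA, Submodule.card_eq_card_quotient_mul_card I]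

theorem nonempty_ringEquiv_zmod_of_natCard_eq_prime (hp : p.Prime) (hA : Nat.card A = p) :
    Nonempty (A ≃+* ZMod p) := by
  have : Finite A := Nat.finite_of_card_ne_zero (hA ▸ hp.ne_zero)
  have := Fintype.ofFinite A
  exact ⟨(ZMod.ringEquivOfPrime A hp (Nat.card_eq_fintype_card (α := A) ▸ hA)).symm⟩

theorem nonempty_ringEquiv_zmod_prod_of_isMaximal_of_ne (hp : p.Prime) (hA : Nat.card A = p ^ 2)
    {I J : Ideal A} (hI : I.IsMaximal) (hJ : J.IsMaximal) (hIJ : I ≠ J) :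
    Nonempty (A ≃+* ZMod p × ZMod p) := by
  have I_ne_bot : I ≠ ⊥ := fun h ↦ hIJ <| hI.eq_of_le hJ.ne_top (h ▸ bot_le)
  have J_ne_bot : J ≠ ⊥ := fun h ↦ hIJ.symm <| hJ.eq_of_le hI.ne_top (h ▸ bot_le)
  have card_quotient_I :=
    (natCard_ideal_and_quotient_of_natCard_eq_prime_sq hp hA I_ne_bot hI.ne_top).2
  have card_quotient_J :=
    (natCard_ideal_and_quotient_of_natCard_eq_prime_sq hp hA J_ne_bot hJ.ne_top).2
  have crt := Ideal.quotientInfEquivQuotientProd I J (Ideal.isCoprime_of_isMaximal hIJ)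
  have inf_eq_bot : I ⊓ J = ⊥ := by
    by_contra inf_ne_bot
    have card_quotient_inf := (natCard_ideal_and_quotient_of_natCard_eq_prime_sq hp hA inf_ne_bot
      (ne_top_of_le_ne_top hI.ne_top inf_le_left)).2
    rw [Nat.card_congr crt.toEquiv, Nat.card_prod, card_quotient_I, card_quotient_J]
      at card_quotient_inf
    exact hp.one_lt.ne' (Nat.eq_of_mul_eq_mul_left hp.pos (by rw [card_quotient_inf, mul_one]))
  obtain ⟨eI⟩ := nonempty_ringEquiv_zmod_of_natCard_eq_prime hp card_quotient_I
  obtain ⟨eJ⟩ := nonempty_ringEquiv_zmod_of_natCard_eq_prime hp card_quotient_J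
  exact ⟨(RingEquiv.quotientBot A).symm.trans <| (Ideal.quotEquivOfEq inf_eq_bot.symm).trans <|
    crt.trans <| eI.prodCongr eJ⟩

theorem isLocalRing_of_natCard_eq_prime_sq (hp : p.Prime) (hA : Nat.card A = p ^ 2)
    (hsplit : ¬ Nonempty (A ≃+* ZMod p × ZMod p)) : IsLocalRing A := by
  have : Finite A := Nat.finite_of_card_ne_zero (hA ▸ pow_ne_zero 2 hp.ne_zero)
  have : Nontrivial A :=
    Finite.one_lt_card_iff_nontrivial.mp (hA ▸ Nat.one_lt_pow two_ne_zero hp.one_lt)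
  obtain ⟨I, hI⟩ := Ideal.exists_maximal A
  refine .of_unique_max_ideal ⟨I, hI, fun J hJ ↦ ?_⟩
  by_contra hJI
  exact hsplit (nonempty_ringEquiv_zmod_prod_of_isMaximal_of_ne hp hA hJ hI hJI)

theorem natCard_units_of_not_split_of_not_isField (hp : p.Prime) (hA : Nat.card A = p ^ 2)
    (hsplit : ¬ Nonempty (A ≃+* ZMod p × ZMod p)) (hfield : ¬ IsField A) :
    Nat.card Aˣ = p * (p - 1) := by
  have : Finite A := Nat.finite_of_card_ne_zero (hA ▸ pow_ne_zero 2 hp.ne_zero)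
  have := isLocalRing_of_natCard_eq_prime_sq hp hA hsplit
  obtain ⟨card_maximalIdeal, card_residueField⟩ :=
    natCard_ideal_and_quotient_of_natCard_eq_prime_sq hp hA
      (IsLocalRing.isField_iff_maximalIdeal_eq.not.mp hfield)
      (IsLocalRing.maximalIdeal.isMaximal A).ne_top
  rw [natCard_units_of_isLocalRing, card_maximalIdeal, card_residueField]

theorem natCard_units_of_natCard_eq_prime_sq (hp : p.Prime) (hA : Nat.card A = p ^ 2) {c : ℤ}
    (hsplit : Nonempty (A ≃+* ZMod p × ZMod p) → c = 1)
    (hram : ¬ Nonempty (A ≃+* ZMod p × ZMod p) → ¬ IsField A → c = 0)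
    (hinert : IsField A → c = -1) :
    (Nat.card Aˣ : ℤ) = (p - 1) * (p - c) := by
  by_cases split : Nonempty (A ≃+* ZMod p × ZMod p)
  · obtain ⟨e⟩ := split
    have : Fact p.Prime := ⟨hp⟩
    rw [hsplit ⟨e⟩, natCard_units_eq_mul_of_ringEquiv_prod e, Nat.card_units, Nat.card_zmod]
    push_cast [hp.one_le]
    ring
  by_cases field : IsField A
  · rw [hinert field, natCard_units_of_isField field, hA]
    push_cast [Nat.one_le_pow 2 p hp.pos]
    ring
  · rw [hram split field, natCard_units_of_not_split_of_not_isField hp hA split field]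
    push_cast [hp.one_le]
    ring

end CardPrimeSq

section QuotientNat

variable (R : Type*) [CommRing R]

theorem natCard_units_quotient_span_mul_of_coprime {m n : ℕ} (hmn : m.Coprime n) :
    Nat.card (R ⧸ Ideal.span {((m * n : ℕ) : R)})ˣ =
      Nat.card (R ⧸ Ideal.span {(m : R)})ˣ * Nat.card (R ⧸ Ideal.span {(n : R)})ˣ := by
  have span_mul : Ideal.span {((m * n : ℕ) : R)} = Ideal.span {(m : R)} * Ideal.span {(n : R)} := by
    rw [Ideal.span_singleton_mul_span_singleton, Nat.cast_mul]
  have span_coprime : IsCoprime (Ideal.span {(m : R)}) (Ideal.span {(n : R)}) :=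
    (Ideal.isCoprime_span_singleton_iff _ _).mpr hmn.cast
  exact natCard_units_eq_mul_of_ringEquiv_prod <|
    (Ideal.quotEquivOfEq span_mul).trans (Ideal.quotientMulEquivQuotientProd _ _ span_coprime)

theorem natCard_units_quotient_span_eq_prod_primeFactors {N : ℕ} (hN : N ≠ 0) :
    Nat.card (R ⧸ Ideal.span {(N : R)})ˣ =
      ∏ p ∈ N.primeFactors, Nat.card (R ⧸ Ideal.span {((p ^ N.factorization p : ℕ) : R)})ˣ := by
  have card_one : Nat.card (R ⧸ Ideal.span {((1 : ℕ) : R)})ˣ = 1 := by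
    have : Subsingleton (R ⧸ Ideal.span {((1 : ℕ) : R)}) := by
      rw [Ideal.Quotient.subsingleton_iff, Nat.cast_one, Ideal.span_singleton_one]
    exact Nat.card_unique
  exact Nat.multiplicative_factorization (fun n ↦ Nat.card (R ⧸ Ideal.span {(n : R)})ˣ)
    (fun _ _ ↦ natCard_units_quotient_span_mul_of_coprime R) card_one hN

variable [Module.Free ℤ R] [Module.Finite ℤ R]

theorem natCard_quotient_span_natCast (n : ℕ) :
    Nat.card (R ⧸ Ideal.span {(n : R)}) = n ^ Module.finrank ℤ R := by
  have span_eq_range :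
      (Ideal.span {(n : R)}).toAddSubgroup = (nsmulAddMonoidHom (α := R) n).range := by
    ext x
    simp [Ideal.mem_span_singleton, dvd_def, eq_comm]
  rw [← AddSubgroup.index_range_nsmul, ← span_eq_range]
  rfl

theorem natCard_units_quotient_span_pow_succ {n : ℕ} (hn : n ≠ 0) (a : ℕ) :
    Nat.card (R ⧸ Ideal.span {((n ^ (a + 1) : ℕ) : R)})ˣ =
      n ^ (Module.finrank ℤ R * a) * Nat.card (R ⧸ Ideal.span {(n : R)})ˣ := by
  set q := Ideal.span {((n ^ (a + 1) : ℕ) : R)}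
  have q_le : q ≤ Ideal.span {(n : R)} := by
    rw [Ideal.span_singleton_le_span_singleton, Nat.cast_pow]
    exact dvd_pow_self _ a.succ_ne_zero
  set I := (Ideal.span {(n : R)}).map (Ideal.Quotient.mk q)
  have I_nilpotent : IsNilpotent I := by
    refine ⟨a + 1, ?_⟩
    rw [← Ideal.map_pow, Ideal.span_singleton_pow, ← Nat.cast_pow]
    exact Ideal.map_quotient_self q
  have e : (R ⧸ q) ⧸ I ≃+* R ⧸ Ideal.span {(n : R)} := DoubleQuot.quotQuotEquivQuotOfLE q_le
  have card_I : Nat.card I = n ^ (Module.finrank ℤ R * a) := by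
    have lagrange := Submodule.card_eq_card_quotient_mul_card I
    rw [Nat.card_congr e.toEquiv, natCard_quotient_span_natCast, natCard_quotient_span_natCast,
      ← pow_mul] at lagrange
    refine Nat.eq_of_mul_eq_mul_right (pow_pos hn.bot_lt (Module.finrank ℤ R)) ?_
    rw [← lagrange, ← pow_add]
    ring
  rw [natCard_units_of_isNilpotent I_nilpotent, card_I,
    Nat.card_congr (Units.mapEquiv e.toMulEquiv).toEquiv]

end QuotientNat

namespace IsOrderOfConductor

variable {K : Type*} [Field K] [NumberField K] {f : ℕ} {O : Subalgebra ℤ K}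

theorem le_integralClosure (hO : IsOrderOfConductor K f O) : O ≤ integralClosure ℤ K := by
  intro x hx
  obtain ⟨a, y, rfl⟩ := (hO x).mp hx
  exact add_mem (intCast_mem _ a) (mul_mem (natCast_mem _ f) y.isIntegral_coe)

theorem natCast_mul_mem (hO : IsOrderOfConductor K f O) (y : 𝓞 K) : (f : K) * y ∈ O :=
  (hO _).mpr ⟨0, y, by rw [Int.cast_zero, zero_add]⟩

theorem finite (hO : IsOrderOfConductor K f O) : Module.Finite ℤ O :=
  have : Module.Finite ℤ (integralClosure ℤ K) := inferInstanceAs (Module.Finite ℤ (𝓞 K))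
  .of_injective (Subalgebra.inclusion hO.le_integralClosure).toLinearMap
    (Subalgebra.inclusion_injective hO.le_integralClosure)

theorem finrank_eq (hO : IsOrderOfConductor K f O) (hf : f ≠ 0) :
    Module.finrank ℤ O = Module.finrank ℚ K := by
  have := hO.finite
  let ι : O →ₗ[ℤ] 𝓞 K := (Subalgebra.inclusion hO.le_integralClosure).toLinearMap
  let mulConductor : 𝓞 K →ₗ[ℤ] O :=
    (LinearMap.mulLeft ℤ (f : K) ∘ₗ (Algebra.linearMap (𝓞 K) K).restrictScalars ℤ).codRestrict
      O.toSubmodule hO.natCast_mul_mem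
  have ι_injective : Function.Injective ι :=
    Subalgebra.inclusion_injective hO.le_integralClosure
  have mulConductor_injective : Function.Injective mulConductor := fun x y h ↦
    RingOfIntegers.coe_injective <|
      mul_left_cancel₀ (Nat.cast_ne_zero.mpr hf) (congrArg Subtype.val h)
  rw [← RingOfIntegers.rank K]
  exact (LinearMap.finrank_le_finrank_of_injective ι_injective).antisymm
    (LinearMap.finrank_le_finrank_of_injective mulConductor_injective)

end IsOrderOfConductor

theorem cartan_card_general (R : Type*) [CommRing R] [Module.Free ℤ R]
    (hR : Module.finrank ℤ R = 2) (N : ℕ) (hN : 0 < N) (χ : ℕ → ℤ)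
    (hχsplit : ∀ p : ℕ, p.Prime → SplitsIn R p → χ p = 1)
    (hχram : ∀ p : ℕ, p.Prime → ¬ SplitsIn R p → ¬ InertIn R p → χ p = 0)
    (hχinert : ∀ p : ℕ, p.Prime → InertIn R p → χ p = -1) :
    (Nat.card (R ⧸ Ideal.span {(N : R)})ˣ : ℤ) =
      ∏ p ∈ N.primeFactors,
        (p : ℤ) ^ (2 * N.factorization p - 2) * ((p : ℤ) - 1) * ((p : ℤ) - χ p) := by
  have : Module.Finite ℤ R := Module.finite_of_finrank_pos (hR ▸ two_pos)
  rw [natCard_units_quotient_span_eq_prod_primeFactors R hN.ne', Nat.cast_prod]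
  refine Finset.prod_congr rfl fun p hpN ↦ ?_
  have hp := Nat.prime_of_mem_primeFactors hpN
  have card_units_mod_p := natCard_units_of_natCard_eq_prime_sq hp
    (hR ▸ natCard_quotient_span_natCast R p) (hχsplit p hp) (hχram p hp) (hχinert p hp)
  obtain ⟨a, ha⟩ := Nat.exists_eq_add_one_of_ne_zero <|
    Finsupp.mem_support_iff.mp (N.support_factorization ▸ hpN)
  rw [ha, natCard_units_quotient_span_pow_succ R hp.ne_zero, hR, Nat.cast_mul, Nat.cast_pow,
    card_units_mod_p, mul_assoc, mul_add_one, Nat.add_sub_cancel]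

/-- Let `O` be an order in an imaginary quadratic field and `N` a positive
integer.  Then `#C_N(O) = ∏_{p^a ∥ N} p^(2a-2)·(p-1)·(p-χ(p))`, where `χ(p)` is `1`, `0`, `-1`
according as `p` is split, ramified or inert in `O`. -/
theorem cartan_card (K : Type*) [Field K] [NumberField K] (hK : IsImagQuadratic K)
    (f : ℕ) (hf : 0 < f) (O : Subalgebra ℤ K) (hO : IsOrderOfConductor K f O)
    (N : ℕ) (hN : 0 < N) (χ : ℕ → ℤ)
    (hχsplit : ∀ p : ℕ, p.Prime → SplitsIn (↥O) p → χ p = 1)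
    (hχram : ∀ p : ℕ, p.Prime → ¬ SplitsIn (↥O) p → ¬ InertIn (↥O) p → χ p = 0)
    (hχinert : ∀ p : ℕ, p.Prime → InertIn (↥O) p → χ p = -1) :
    (Nat.card (↥O ⧸ Ideal.span {(N : ↥O)})ˣ : ℤ) =
      ∏ p ∈ N.primeFactors,
        (p : ℤ) ^ (2 * N.factorization p - 2) * ((p : ℤ) - 1) * ((p : ℤ) - χ p) := by
  have := hO.finite
  exact cartan_card_general O ((hO.finrank_eq hf.ne').trans hK.1) N hN χ hχsplit hχram hχinert
end

section
/- Let O be an order in an imaginary quadratic field K, let I be a nonzero ideal of O that is invertible as a fractional O-ideal, and let Λ be an invertible fractional O-ideal. Set (Λ:I) = {x ∈ K : xI ⊆ Λ}. Then the O-module (Λ:I)/Λ is isomorphic to O/I as an O-module; in particular its cardinality equals #(O/I). -/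
set_option synthInstance.maxHeartbeats 1000000
set_option maxHeartbeats 1000000

open NumberField

/-!
Let `I` be an ideal of a commutative ring `R`. If `I` is invertible, then `M = (Λ : I)` equals
`Λ I⁻¹`; it is again invertible, and `I M = Λ`. Hence `(Λ : I) / Λ = M / I M ≅ R / I ⊗ M` is an
invertible module over `R / I`. When `R / I` is semilocal (for a nonzero ideal of an order it is
even finite), its Picard group is trivial, so this module is free of rank one.
-/

section Semiring

variable {R : Type*} [CommSemiring R]

theorem comap_subtype_smul_self {N : Type*} [AddCommMonoid N] [Module R N] (I : Ideal R)
    (M : Submodule R N) : Submodule.comap M.subtype (I • M) = I • ⊤ := by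
  rw [Submodule.comap_smul'' M.subtype_injective M.range_subtype.ge, Submodule.comap_subtype_self]

theorem moduleInvertible_of_isUnit {A : Type*} [Semiring A] [Algebra R A] [FaithfulSMul R A]
    {M : Submodule R A} (hM : IsUnit M) : Module.Invertible R M := by
  obtain ⟨u, rfl⟩ := hM
  infer_instance

theorem map_linearMap_mul_eq_smul {A : Type*} [Semiring A] [Algebra R A] (I : Ideal R)
    (M : Submodule R A) : Submodule.map (Algebra.linearMap R A) I * M = I • M := by
  apply le_antisymm
  · rw [Submodule.mul_le]
    rintro _ ⟨r, hr, rfl⟩ m hm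
    rw [Algebra.linearMap_apply, ← Algebra.smul_def]
    exact Submodule.smul_mem_smul hr hm
  · rw [Submodule.smul_le]
    intro r hr m hm
    rw [Algebra.smul_def]
    exact Submodule.mul_mem_mul ⟨r, hr, rfl⟩ hm

variable {A : Type*} [CommSemiring A] [Algebra R A]

theorem submodule_div_eq_mul_of_mul_eq_one {B J : Submodule R A} (hBJ : B * J = 1)
    (Λ : Submodule R A) : Λ / B = Λ * J := by
  apply le_antisymm
  · calc Λ / B = Λ / B * B * J := by rw [mul_assoc, hBJ, mul_one]
      _ ≤ Λ * J := mul_le_mul_left (Submodule.le_div_iff_mul_le.mp le_rfl) J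
  · rw [Submodule.le_div_iff_mul_le, mul_assoc, mul_comm J, hBJ, mul_one]

theorem submodule_mul_div_cancel_of_isUnit {B : Submodule R A} (hB : IsUnit B)
    (Λ : Submodule R A) : B * (Λ / B) = Λ := by
  obtain ⟨J, hBJ⟩ := hB.exists_right_inv
  rw [submodule_div_eq_mul_of_mul_eq_one hBJ, mul_left_comm, hBJ, mul_one]

theorem isUnit_submodule_div {Λ B : Submodule R A} (hΛ : IsUnit Λ) (hB : IsUnit B) :
    IsUnit (Λ / B) :=
  isUnit_of_mul_isUnit_right ((submodule_mul_div_cancel_of_isUnit hB Λ).symm ▸ hΛ)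

end Semiring

section Ring

open TensorProduct

variable {R : Type*} [CommRing R]

theorem nonempty_quotient_smul_top_equiv (M : Type*) [AddCommGroup M] [Module R M]
    [Module.Invertible R M] (I : Ideal R) [Finite (MaximalSpectrum (R ⧸ I))] :
    Nonempty ((M ⧸ (I • ⊤ : Submodule R M)) ≃ₗ[R] R ⧸ I) := by
  have pic_trivial : Subsingleton (CommRing.Pic (R ⧸ I)) := inferInstance
  have free_tensor : Module.Free (R ⧸ I) ((R ⧸ I) ⊗[R] M) := inferInstance
  obtain ⟨e⟩ := Module.Invertible.free_iff_linearEquiv.mp free_tensor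
  exact ⟨(quotTensorEquivQuotSMul M I).symm ≪≫ₗ e.restrictScalars R⟩

theorem colon_quotient_iso_general {A : Type*} [CommRing A] [Algebra R A] [FaithfulSMul R A]
    (I : Ideal R) [Finite (MaximalSpectrum (R ⧸ I))]
    (hI : IsUnit (Submodule.map (Algebra.linearMap R A) I))
    {Λ : Submodule R A} (hΛ : IsUnit Λ) :
    Nonempty
      ((↥(Λ / Submodule.map (Algebra.linearMap R A) I) ⧸
          Submodule.comap (Λ / Submodule.map (Algebra.linearMap R A) I).subtype Λ)
        ≃ₗ[R] (R ⧸ I)) ∧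
    Nat.card
      (↥(Λ / Submodule.map (Algebra.linearMap R A) I) ⧸
        Submodule.comap (Λ / Submodule.map (Algebra.linearMap R A) I).subtype Λ) =
      Nat.card (R ⧸ I) := by
  set M := Λ / Submodule.map (Algebra.linearMap R A) I
  have : Module.Invertible R M := moduleInvertible_of_isUnit (isUnit_submodule_div hΛ hI)
  have smul_colon : I • M = Λ := by
    rw [← map_linearMap_mul_eq_smul, submodule_mul_div_cancel_of_isUnit hI]
  have comap_eq : Submodule.comap M.subtype Λ = I • ⊤ := by
    rw [← comap_subtype_smul_self, smul_colon]
  obtain ⟨e⟩ := nonempty_quotient_smul_top_equiv M I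
  let colonEquiv := Submodule.quotEquivOfEq _ _ comap_eq ≪≫ₗ e
  exact ⟨⟨colonEquiv⟩, Nat.card_congr colonEquiv.toEquiv⟩

end Ring

section Order

variable {K : Type*} [Field K] [NumberField K] {O : Subalgebra ℤ K}

theorem IsOrderOfConductor.le_integralClosure_s1 {f : ℕ} (hO : IsOrderOfConductor K f O) :
    O ≤ integralClosure ℤ K := by
  intro x hx
  obtain ⟨a, y, rfl⟩ := (hO x).mp hx
  exact add_mem (intCast_mem _ a) (mul_mem (natCast_mem _ f) y.2)

theorem finite_quotient_of_le_integralClosure (hO : O ≤ integralClosure ℤ K) {I : Ideal O}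
    (hI : I ≠ ⊥) : Finite (O ⧸ I) := by
  have : IsNoetherian ℤ (integralClosure ℤ K) := inferInstanceAs (IsNoetherian ℤ (𝓞 K))
  have : Module.Finite ℤ O :=
    Module.Finite.of_injective (Subalgebra.inclusion hO).toLinearMap
      (Subalgebra.inclusion_injective hO)
  exact I.finiteQuotientOfFreeOfNeBot hI

end Order

/-- If `I` is a nonzero invertible ideal of an order `O` in an imaginary
quadratic field `K` and `Λ` is an invertible fractional `O`-ideal, then
`(Λ:I)/Λ ≅ O/I` as `O`-modules; in particular the two have the same cardinality.
Here `(Λ:I) = {x ∈ K : xI ⊆ Λ}` is definitionally `Λ / I` as submodules of `K`. -/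
theorem colon_quotient_iso (K : Type*) [Field K] [NumberField K] (hK : IsImagQuadratic K)
    (f : ℕ) (hf : 0 < f) (O : Subalgebra ℤ K) (hO : IsOrderOfConductor K f O)
    (I : Ideal ↥O) (hInz : I ≠ ⊥)
    (hIinv : ∃ J : Submodule ↥O K, Submodule.map (Algebra.linearMap ↥O K) I * J = 1)
    (Λ : Submodule ↥O K) (hΛnz : Λ ≠ ⊥) (hΛfg : Λ.FG)
    (hΛinv : ∃ J : Submodule ↥O K, Λ * J = 1) :
    Nonempty
      ((↥(Λ / Submodule.map (Algebra.linearMap ↥O K) I) ⧸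
          Submodule.comap (Λ / Submodule.map (Algebra.linearMap ↥O K) I).subtype Λ)
        ≃ₗ[↥O] (↥O ⧸ I)) ∧
    Nat.card
      (↥(Λ / Submodule.map (Algebra.linearMap ↥O K) I) ⧸
        Submodule.comap (Λ / Submodule.map (Algebra.linearMap ↥O K) I).subtype Λ) =
      Nat.card (↥O ⧸ I) := by
  have : Finite (O ⧸ I) := finite_quotient_of_le_integralClosure hO.le_integralClosure_s1 hInz
  exact colon_quotient_iso_general I (isUnit_iff_exists_inv.mpr hIinv)
    (isUnit_iff_exists_inv.mpr hΛinv)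
end

section
/- Let K be an imaginary quadratic field with ring of integers O_K, let Λ be a nonzero fractional O_K-ideal, and let M be a finite O_K-submodule of the O_K-module K/Λ. Let I = ann_{O_K}(M) = {x ∈ O_K : xM = 0}. Then M = {P ∈ K/Λ : xP = 0 for all x ∈ I}, M is isomorphic as an O_K-module to O_K/I, and #M = #(O_K/I). -/
set_option synthInstance.maxHeartbeats 1000000
set_option maxHeartbeats 1000000

open NumberField

/-!
Let `R` be a Dedekind domain with fraction field `K` and `Λ` a nonzero `R`-submodule of `K`.
A fractional ideal containing a nonzero fractional ideal `a` is generated over `a` by a single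
element, so every finitely generated submodule of `K/Λ` is cyclic, hence isomorphic to the
quotient of `R` by its annihilator. If `P` is killed by `I = ann M`, then `M ⊆ M + RP` are both
cyclic with annihilator `I`, so both are isomorphic to `R/I`. As `K/Λ` is torsion, `I ≠ 0` and
`R/I` is Artinian; an Artinian module is not isomorphic to a proper submodule of itself, so
`P ∈ M`.
-/

theorem eq_of_le_of_linearEquiv_of_isArtinian {R X : Type*} [Ring R] [AddCommGroup X] [Module R X]
    {M N : Submodule R X} [IsArtinian R N] (hMN : M ≤ N) (e : N ≃ₗ[R] M) : M = N := by
  refine le_antisymm hMN fun x hx ↦ ?_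
  have comp_surjective : Function.Surjective (Submodule.inclusion hMN ∘ₗ e.toLinearMap) :=
    IsArtinian.surjective_of_injective_endomorphism _
      ((Submodule.inclusion_injective hMN).comp e.injective)
  obtain ⟨y, hy⟩ := comp_surjective ⟨x, hx⟩
  rw [show x = e y from congrArg Subtype.val hy.symm]
  exact (e y).2

theorem exists_fg_map_eq {R X Y : Type*} [Semiring R] [AddCommMonoid X] [Module R X]
    [AddCommMonoid Y] [Module R Y] {f : X →ₗ[R] Y} (hf : Function.Surjective f)
    {M : Submodule R Y} (hM : M.FG) : ∃ N : Submodule R X, N.FG ∧ N.map f = M := by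
  obtain ⟨s, hs, rfl⟩ := Submodule.fg_def.mp hM
  refine ⟨Submodule.span R (Function.surjInv hf '' s), Submodule.fg_span (hs.image _), ?_⟩
  rw [Submodule.map_span, (Function.rightInverse_surjInv hf).image_image]

section CommRing

variable {R X : Type*} [CommRing R] [AddCommGroup X] [Module R X]

theorem nonempty_linearEquiv_quotient_annihilator_of_isPrincipal {M : Submodule R X}
    (hM : M.IsPrincipal) : Nonempty (M ≃ₗ[R] R ⧸ M.annihilator) := by
  obtain ⟨m, rfl⟩ := hM
  have torsionOf_eq : Ideal.torsionOf R X m = (R ∙ m).annihilator := by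
    ext x
    rw [Ideal.mem_torsionOf_iff, Submodule.mem_annihilator_span_singleton]
  exact ⟨(Ideal.quotTorsionOfEquivSpanSingleton R X m).symm ≪≫ₗ
    Submodule.quotEquivOfEq _ _ torsionOf_eq⟩

theorem annihilator_sup_span_singleton_eq {M : Submodule R X} {P : X}
    (hP : P ∈ Submodule.torsionBySet R X M.annihilator) :
    (M ⊔ R ∙ P).annihilator = M.annihilator := by
  rw [Submodule.annihilator_sup, inf_eq_left]
  intro x hx
  rw [Submodule.mem_annihilator_span_singleton]
  exact (Submodule.mem_torsionBySet_iff _ P).mp hP ⟨x, hx⟩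

theorem torsionBySet_annihilator_eq_of_forall_fg_isPrincipal
    (hX : ∀ N : Submodule R X, N.FG → N.IsPrincipal) {M : Submodule R X} (hM : M.FG)
    [IsArtinian R (R ⧸ M.annihilator)] :
    Submodule.torsionBySet R X M.annihilator = M := by
  refine le_antisymm (fun P hP ↦ ?_) fun P hP ↦
    (Submodule.mem_torsionBySet_iff _ P).mpr fun x ↦ Submodule.mem_annihilator.mp x.2 P hP
  obtain ⟨eM⟩ := nonempty_linearEquiv_quotient_annihilator_of_isPrincipal (hX M hM)
  obtain ⟨eN⟩ := nonempty_linearEquiv_quotient_annihilator_of_isPrincipal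
    (hX (M ⊔ R ∙ P) (hM.sup (Submodule.fg_span_singleton P)))
  rw [annihilator_sup_span_singleton_eq hP] at eN
  have : IsArtinian R ↥(M ⊔ R ∙ P) := isArtinian_of_linearEquiv eN.symm
  have eq_sup : M = M ⊔ R ∙ P :=
    eq_of_le_of_linearEquiv_of_isArtinian le_sup_left (eN ≪≫ₗ eM.symm)
  rw [eq_sup]
  exact Submodule.mem_sup_right (Submodule.mem_span_singleton_self P)

theorem annihilator_ne_bot_of_isTorsion_of_fg [Nontrivial R] (hX : Module.IsTorsion R X)
    {M : Submodule R X} (hM : M.FG) : M.annihilator ≠ ⊥ := by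
  have : Module.Finite R M := Module.Finite.iff_fg.mpr hM
  have isTorsion : Module.IsTorsion R M := fun {m} ↦
    (@hX m).imp fun _ hx ↦ Subtype.ext hx
  obtain ⟨x, hx, hx₀⟩ := Submodule.annihilator_top_inter_nonZeroDivisors isTorsion
  rw [SetLike.mem_coe, Submodule.annihilator_top] at hx
  exact (Submodule.ne_bot_iff _).mpr ⟨x, hx, nonZeroDivisors.ne_zero hx₀⟩

theorem isArtinian_quotient_of_ne_bot [IsDomain R] [IsNoetherianRing R] [Ring.KrullDimLE 1 R]
    {I : Ideal R} (hI : I ≠ ⊥) : IsArtinian R (R ⧸ I) := by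
  obtain ⟨x, hxI, hx⟩ := Submodule.exists_mem_ne_zero_of_ne_bot hI
  have : IsArtinian R (R ⧸ Ideal.span {x}) :=
    (isFiniteLength_iff_isNoetherian_isArtinian.mp
      (isFiniteLength_quotient_span_singleton R (mem_nonZeroDivisors_of_ne_zero hx))).2
  exact isArtinian_of_surjective _ _ (Submodule.factor_surjective
    ((Ideal.span_singleton_le_iff_mem I).mpr hxI))

end CommRing

section FractionField

variable {R K : Type*} [CommRing R] [Field K] [Algebra R K] [IsFractionRing R K]

theorem isTorsion_quotient_of_ne_bot {Λ : Submodule R K} (hΛ : Λ ≠ ⊥) :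
    Module.IsTorsion R (K ⧸ Λ) := by
  obtain ⟨l, hlΛ, hl⟩ := Submodule.exists_mem_ne_zero_of_ne_bot hΛ
  intro P
  obtain ⟨y, rfl⟩ := Λ.mkQ_surjective P
  obtain ⟨⟨a, b⟩, hab⟩ := IsLocalization.surj (nonZeroDivisors R) (y / l)
  have smul_eq : (b : R) • y = a • l := by
    rw [Algebra.smul_def, Algebra.smul_def, ← hab]
    field_simp
  refine ⟨b, ?_⟩
  rw [Submonoid.smul_def, ← map_smul, smul_eq, Submodule.mkQ_apply,
    Submodule.Quotient.mk_eq_zero]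
  exact Λ.smul_mem a hlΛ

variable [IsDedekindDomain R]

theorem exists_sup_span_singleton_eq_of_fg {Λ L : Submodule R K} (hΛ : Λ ≠ ⊥) (hΛL : Λ ≤ L)
    (hL : L.FG) : ∃ t : K, Λ ⊔ R ∙ t = L := by
  obtain ⟨d, hd, hdL⟩ := FractionalIdeal.isFractional_of_fg (S := nonZeroDivisors R) hL
  let a : FractionalIdeal (nonZeroDivisors R) K := ⟨Λ, d, hd, fun x hx ↦ hdL x (hΛL hx)⟩
  let c : FractionalIdeal (nonZeroDivisors R) K := ⟨L, d, hd, hdL⟩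
  have a_ne_zero : a ≠ 0 := FractionalIdeal.coeToSubmodule_ne_bot.mp hΛ
  obtain ⟨t, ht⟩ :=
    IsDedekindDomain.exists_add_spanSingleton_mul_eq (c := c) hΛL a_ne_zero one_ne_zero
  refine ⟨t, ?_⟩
  rw [mul_one] at ht
  calc Λ ⊔ R ∙ t = ↑(a + FractionalIdeal.spanSingleton (nonZeroDivisors R) t) := by
        rw [FractionalIdeal.coe_add, FractionalIdeal.coe_spanSingleton]
        rfl
    _ = L := congrArg FractionalIdeal.coeToSubmodule ht

theorem isPrincipal_submodule_quotient_of_fg {Λ : Submodule R K} (hΛ : Λ ≠ ⊥)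
    {M : Submodule R (K ⧸ Λ)} (hM : M.FG) : M.IsPrincipal := by
  obtain ⟨l, hlΛ, hl⟩ := Submodule.exists_mem_ne_zero_of_ne_bot hΛ
  obtain ⟨N, hN, rfl⟩ := exists_fg_map_eq Λ.mkQ_surjective hM
  obtain ⟨t, ht⟩ := exists_sup_span_singleton_eq_of_fg
    (mt Submodule.span_singleton_eq_bot.mp hl) (le_sup_left : R ∙ l ≤ R ∙ l ⊔ N)
    ((Submodule.fg_span_singleton l).sup hN)
  have map_span_l : (R ∙ l).map Λ.mkQ = ⊥ := by
    rw [Submodule.map_span, Set.image_singleton, Submodule.span_singleton_eq_bot]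
    exact (Submodule.Quotient.mk_eq_zero Λ).mpr hlΛ
  refine ⟨Λ.mkQ t, ?_⟩
  calc N.map Λ.mkQ = (R ∙ l ⊔ N).map Λ.mkQ := by
        rw [Submodule.map_sup, map_span_l, bot_sup_eq]
    _ = (R ∙ l ⊔ R ∙ t).map Λ.mkQ := by rw [ht]
    _ = R ∙ Λ.mkQ t := by
        rw [Submodule.map_sup, map_span_l, bot_sup_eq, Submodule.map_span, Set.image_singleton]

end FractionField

theorem finite_submodule_eq_torsion_kernel_general {R K : Type*} [CommRing R]
    [IsDedekindDomain R] [Field K] [Algebra R K] [IsFractionRing R K]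
    {Λ : Submodule R K} (hΛ : Λ ≠ ⊥) {M : Submodule R (K ⧸ Λ)} (hM : M.FG) :
    (∀ P : K ⧸ Λ, P ∈ M ↔ ∀ x ∈ M.annihilator, x • P = 0) ∧
    Nonempty (M ≃ₗ[R] R ⧸ M.annihilator) := by
  have := isArtinian_quotient_of_ne_bot
    (annihilator_ne_bot_of_isTorsion_of_fg (isTorsion_quotient_of_ne_bot hΛ) hM)
  have torsion_eq := torsionBySet_annihilator_eq_of_forall_fg_isPrincipal
    (fun _ ↦ isPrincipal_submodule_quotient_of_fg hΛ) hM
  refine ⟨fun P ↦ ?_, nonempty_linearEquiv_quotient_annihilator_of_isPrincipal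
    (isPrincipal_submodule_quotient_of_fg hΛ hM)⟩
  conv_lhs => rw [← torsion_eq]
  exact (Submodule.mem_torsionBySet_iff _ P).trans Subtype.forall

/-- Let `K` be an imaginary quadratic field with ring of integers `𝓞 K`,
`Λ` a nonzero fractional `𝓞 K`-ideal, and `M` a finite `𝓞 K`-submodule of `K/Λ`, with
annihilator `I`.  Then `M` is exactly the set of `I`-torsion points of `K/Λ`,
`M ≅ 𝓞 K / I` as `𝓞 K`-modules, and `#M = #(𝓞 K / I)`. -/
theorem finite_submodule_eq_torsion_kernel (K : Type*) [Field K] [NumberField K]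
    (hK : IsImagQuadratic K)
    (Λ : Submodule (𝓞 K) K) (hΛnz : Λ ≠ ⊥) (hΛfg : Λ.FG)
    (M : Submodule (𝓞 K) (K ⧸ Λ)) (hMfin : Set.Finite (M : Set (K ⧸ Λ))) :
    (∀ P : K ⧸ Λ, P ∈ M ↔ ∀ x ∈ M.annihilator, x • P = 0) ∧
    Nonempty (↥M ≃ₗ[𝓞 K] (𝓞 K ⧸ M.annihilator)) ∧
    Nat.card ↥M = Nat.card (𝓞 K ⧸ M.annihilator) := by
  obtain ⟨mem_iff, ⟨e⟩⟩ := finite_submodule_eq_torsion_kernel_general hΛnz (M := M)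
    ⟨hMfin.toFinset, by simp⟩
  exact ⟨mem_iff, ⟨e⟩, Nat.card_congr e.toEquiv⟩
end

section
/- Let K be an imaginary quadratic field with ring of integers O_K, write O_K = ℤ·1 ⊕ ℤ·τ_K, and let f, N be positive integers and p a prime. Set R = O_K ⊗_ℤ ℤ_p (a free ℤ_p-module with basis 1, τ_K), and let S = ℤ_p + f·R and S' = ℤ_p + Nf·R, which are ℤ_p-subalgebras of R. Then {x ∈ R : x is a unit of S and x − 1 ∈ N·S} = {x ∈ R : x is a unit of S'} ∩ {x ∈ R : x is a unit of R and x − 1 ∈ N·R}, where for a subring T ⊆ R an element x is a unit of T if x ∈ T and x has a multiplicative inverse lying in T. -/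
set_option synthInstance.maxHeartbeats 1000000
set_option maxHeartbeats 1000000

open NumberField

/-- Membership in the `ℤ_p`-subalgebra `ℤ_p + g·R` of `R = 𝓞_K ⊗_ℤ ℤ_p`. -/
def MemPadicOrder (K : Type*) [Field K] [NumberField K] (p : ℕ) [Fact p.Prime] (g : ℕ)
    (x : TensorProduct ℤ (𝓞 K) ℤ_[p]) : Prop :=
  ∃ (a : ℤ_[p]) (y : TensorProduct ℤ (𝓞 K) ℤ_[p]),
    x = Algebra.TensorProduct.includeRight a + (g : TensorProduct ℤ (𝓞 K) ℤ_[p]) * y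

/-- `x` is a unit of the subring `ℤ_p + g·R` of `R = 𝓞_K ⊗_ℤ ℤ_p`: it lies in the subring
and has a multiplicative inverse lying in the subring. -/
def UnitOfPadicOrder (K : Type*) [Field K] [NumberField K] (p : ℕ) [Fact p.Prime] (g : ℕ)
    (x : TensorProduct ℤ (𝓞 K) ℤ_[p]) : Prop :=
  MemPadicOrder K p g x ∧ ∃ y, MemPadicOrder K p g y ∧ x * y = 1

/-!
Write `R = 𝓞_K ⊗ ℤ_p`. Since `R` is faithfully flat over `ℤ_p`, we have `ℤ_p ∩ N·R = N·ℤ_p`, so the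
modular law gives `N·S = (ℤ_p + Nf·R) ∩ N·R = S' ∩ N·R`. Hence `x - 1 ∈ N·S` says exactly that
`x ∈ S'` and `x ≡ 1 mod N·R`. Moreover, if `x ∈ Sˣ` and `x - 1 ∈ N·S`, then
`x⁻¹ - 1 = -x⁻¹ (x - 1) ∈ N·S ⊆ S'`, so `x` is a unit of `S'`.
The argument works for any ideal `J` of the base ring in place of `(N)`.
-/

theorem mem_units_ofUnits_iff {M : Type*} [CommMonoid M] {S : Submonoid M} {x : M} :
    x ∈ S.units.ofUnits ↔ x ∈ S ∧ ∃ y ∈ S, x * y = 1 := by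
  constructor
  · rintro ⟨u, ⟨hu, hu'⟩, rfl⟩
    exact ⟨hu, _, hu', u.mul_inv⟩
  · rintro ⟨hx, y, hy, hxy⟩
    exact ⟨.mkOfMulEqOne x y hxy, ⟨hx, hy⟩, rfl⟩

theorem mem_span_natCast_smul {A R : Type*} [CommSemiring A] [Semiring R] [Algebra A R]
    {n : ℕ} {P : Submodule A R} {x : R} :
    x ∈ Ideal.span {(n : A)} • P ↔ ∃ s ∈ P, x = n * s := by
  simp [Submodule.ideal_span_singleton_smul, Submodule.mem_smul_pointwise_iff_exists, eq_comm,
    Nat.cast_smul_eq_nsmul]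

theorem mul_mem_smul_subalgebra {A R : Type*} [CommSemiring A] [Semiring R] [Algebra A R]
    {S : Subalgebra A R} {J : Ideal A} {s x : R}
    (hs : s ∈ S) (hx : x ∈ J • S.toSubmodule) : s * x ∈ J • S.toSubmodule := by
  refine Submodule.smul_induction_on hx (fun j hj t ht ↦ ?_) fun y z hy hz ↦ ?_
  · rw [mul_smul_comm]
    exact Submodule.smul_mem_smul hj (S.mul_mem hs ht)
  · rw [mul_add]
    exact add_mem hy hz

theorem inv_sub_one_mem_smul_subalgebra {A R : Type*} [CommRing A] [Ring R] [Algebra A R]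
    {S : Subalgebra A R} {J : Ideal A} {u : Rˣ}
    (hu : ↑u⁻¹ ∈ S) (h : (u : R) - 1 ∈ J • S.toSubmodule) :
    (↑u⁻¹ : R) - 1 ∈ J • S.toSubmodule := by
  have inv_sub_one : (↑u⁻¹ : R) - 1 = -↑u⁻¹ * (u - 1) := by
    rw [neg_mul, mul_sub, u.inv_mul, mul_one, neg_sub]
  rw [inv_sub_one]
  exact mul_mem_smul_subalgebra (S.neg_mem hu) h

section ConductorOrder

variable {A R : Type*} [CommRing A] [CommRing R] [Algebra A R]

variable (A) in
/-- The subalgebra `A + I` of the `A`-algebra `R`, for an ideal `I` of `R`, generalizing the local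
orders `ℤ_p + g·R`. It is encoded as the preimage of the image of `A` in `R ⧸ I`. -/
def conductorOrder (I : Ideal R) : Subalgebra A R :=
  (⊥ : Subalgebra A (R ⧸ I)).comap (Ideal.Quotient.mkₐ A I)

theorem mem_conductorOrder {I : Ideal R} {x : R} :
    x ∈ conductorOrder A I ↔ ∃ a : A, ∃ i ∈ I, algebraMap A R a + i = x := by
  change Ideal.Quotient.mk I x ∈ (⊥ : Subalgebra A (R ⧸ I)) ↔ _
  simp only [Algebra.mem_bot, Set.mem_range]
  refine exists_congr fun a ↦ ?_
  rw [eq_comm, ← Ideal.Quotient.mk_algebraMap, Ideal.Quotient.mk_eq_mk_iff_sub_mem]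
  exact ⟨fun h ↦ ⟨_, h, add_sub_cancel _ _⟩, by rintro ⟨i, hi, rfl⟩; simpa using hi⟩

theorem toSubmodule_conductorOrder (I : Ideal R) :
    (conductorOrder A I).toSubmodule = 1 ⊔ I.restrictScalars A := by
  ext x
  simp [mem_conductorOrder, Submodule.mem_sup]

theorem conductorOrder_mono {I I' : Ideal R} (h : I ≤ I') :
    conductorOrder A I ≤ conductorOrder A I' := by
  intro x hx
  obtain ⟨a, i, hi, rfl⟩ := mem_conductorOrder.1 hx
  exact mem_conductorOrder.2 ⟨a, i, h hi, rfl⟩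

theorem one_inf_smul_top_of_faithfullyFlat [Module.FaithfullyFlat A R] (J : Ideal A) :
    (1 : Submodule A R) ⊓ J • ⊤ = J • 1 := by
  refine le_antisymm ?_ (le_inf Submodule.smul_le_right (Submodule.smul_mono le_rfl le_top))
  rintro _ ⟨hx, hxJ⟩
  obtain ⟨a, rfl⟩ := Submodule.mem_one.1 hx
  have ha : a ∈ J := by
    rw [← J.comap_map_eq_self_of_faithfullyFlat (B := R)]
    simpa [Ideal.smul_top_eq_map] using hxJ
  rw [Algebra.algebraMap_eq_smul_one]
  exact Submodule.smul_mem_smul ha (Submodule.one_le.1 le_rfl)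

theorem smul_conductorOrder [Module.FaithfullyFlat A R] (J : Ideal A) (I : Ideal R) :
    J • (conductorOrder A I).toSubmodule =
      (conductorOrder A (J.map (algebraMap A R) * I)).toSubmodule ⊓ J • ⊤ := by
  have hJI : J • I.restrictScalars A ≤ J • ⊤ := Submodule.smul_mono le_rfl le_top
  calc J • (conductorOrder A I).toSubmodule
      = J • I.restrictScalars A ⊔ J • 1 := by
        rw [toSubmodule_conductorOrder, Submodule.smul_sup, sup_comm]
    _ = (J • I.restrictScalars A ⊔ 1) ⊓ J • ⊤ := by
        rw [sup_inf_assoc_of_le _ hJI, one_inf_smul_top_of_faithfullyFlat]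
    _ = (conductorOrder A (J.map (algebraMap A R) * I)).toSubmodule ⊓ J • ⊤ := by
        rw [toSubmodule_conductorOrder, ← smul_eq_mul, Ideal.smul_restrictScalars, sup_comm]

end ConductorOrder

theorem padic_order_unit_congruence_general {A R : Type*} [CommRing A] [CommRing R] [Algebra A R]
    [Module.FaithfullyFlat A R] (J : Ideal A) (I : Ideal R) (x : R) :
    (x ∈ (conductorOrder A I).toSubmonoid.units.ofUnits ∧
        x - 1 ∈ J • (conductorOrder A I).toSubmodule) ↔
      (x ∈ (conductorOrder A (J.map (algebraMap A R) * I)).toSubmonoid.units.ofUnits ∧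
        IsUnit x ∧ x - 1 ∈ J • (⊤ : Submodule A R)) := by
  set S := conductorOrder A I
  set S' := conductorOrder A (J.map (algebraMap A R) * I)
  have mem_smul_iff (y : R) :
      y - 1 ∈ J • S.toSubmodule ↔ y ∈ S' ∧ y - 1 ∈ J • (⊤ : Submodule A R) := by
    rw [smul_conductorOrder]
    exact and_congr_left' (S'.toSubmodule.sub_mem_iff_left S'.one_mem)
  constructor
  · rintro ⟨⟨u, ⟨-, hu⟩, rfl⟩, h⟩
    have ⟨hS', hJ⟩ := (mem_smul_iff u).1 h
    have hS'_inv := ((mem_smul_iff _).1 (inv_sub_one_mem_smul_subalgebra hu h)).1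
    exact ⟨⟨u, ⟨hS', hS'_inv⟩, rfl⟩, u.isUnit, hJ⟩
  · rintro ⟨⟨u, hu, rfl⟩, -, hJ⟩
    have hS : S'.toSubmonoid ≤ S.toSubmonoid := conductorOrder_mono Ideal.mul_le_right
    exact ⟨⟨u, Submonoid.units_mono hS hu, rfl⟩, (mem_smul_iff u).2 ⟨hu.1, hJ⟩⟩

attribute [local instance] Algebra.TensorProduct.rightAlgebra

section PadicOrder

open TensorProduct

instance faithfullyFlat_tensorProduct_right (R A B : Type*) [CommRing R] [CommRing A] [CommRing B]
    [Algebra R A] [Algebra R B] [Module.FaithfullyFlat R A] :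
    Module.FaithfullyFlat B (A ⊗[R] B) :=
  .of_linearEquiv B (B ⊗[R] A) (Algebra.TensorProduct.commRight R B A).symm.toLinearEquiv

variable {K : Type*} [Field K] [NumberField K] {p : ℕ} [Fact p.Prime] {g : ℕ}
  {x : 𝓞 K ⊗[ℤ] ℤ_[p]}

theorem memPadicOrder_iff :
    MemPadicOrder K p g x ↔
      x ∈ conductorOrder ℤ_[p] (Ideal.span {(g : 𝓞 K ⊗[ℤ] ℤ_[p])}) := by
  simp [MemPadicOrder, mem_conductorOrder, Ideal.mem_span_singleton', mul_comm, eq_comm,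
    Algebra.TensorProduct.right_algebraMap_apply]

theorem unitOfPadicOrder_iff :
    UnitOfPadicOrder K p g x ↔
      x ∈ (conductorOrder ℤ_[p]
        (Ideal.span {(g : 𝓞 K ⊗[ℤ] ℤ_[p])})).toSubmonoid.units.ofUnits := by
  simp only [UnitOfPadicOrder, mem_units_ofUnits_iff, memPadicOrder_iff]
  rfl

end PadicOrder

/-- With `R = 𝓞_K ⊗_ℤ ℤ_p`, `S = ℤ_p + f·R` and `S' = ℤ_p + Nf·R`, one has
`{x : x ∈ Sˣ, x ≡ 1 mod N·S} = S'ˣ ∩ {x ∈ Rˣ : x ≡ 1 mod N·R}`. -/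
theorem padic_order_unit_congruence (K : Type*) [Field K] [NumberField K]
    (hK : IsImagQuadratic K) (f N : ℕ) (hf : 0 < f) (hN : 0 < N)
    (p : ℕ) [Fact p.Prime] :
    ∀ x : TensorProduct ℤ (𝓞 K) ℤ_[p],
      (UnitOfPadicOrder K p f x ∧
        ∃ s, MemPadicOrder K p f s ∧ x - 1 = (N : TensorProduct ℤ (𝓞 K) ℤ_[p]) * s) ↔
      (UnitOfPadicOrder K p (N * f) x ∧
        (IsUnit x ∧ ∃ r : TensorProduct ℤ (𝓞 K) ℤ_[p],
          x - 1 = (N : TensorProduct ℤ (𝓞 K) ℤ_[p]) * r)) := by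
  intro x
  simpa [unitOfPadicOrder_iff, memPadicOrder_iff, mem_span_natCast_smul, Ideal.map_span,
      Ideal.span_singleton_mul_span_singleton, -Ideal.smul_top_eq_map]
    using padic_order_unit_congruence_general (Ideal.span {(N : ℤ_[p])}) (Ideal.span {↑f}) x
end

section
/- Let O be an order in an imaginary quadratic field and let N = ℓ_1^{a_1} ⋯ ℓ_r^{a_r} be a positive integer with its prime factorization. Then H(O,N) holds if and only if H(O, ℓ_i^{a_i}) holds for all 1 ≤ i ≤ r. -/
set_option synthInstance.maxHeartbeats 1000000
set_option maxHeartbeats 1000000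

open NumberField

/-- The condition `H(O,N)`: there is an element `P` of additive order `N` in `O/NO`
whose orbit under the Cartan group `C_N(O) = (O/NO)ˣ` has cardinality `φ(N)`. -/
def CartanH (R : Type*) [CommRing R] (N : ℕ) : Prop :=
  ∃ P : R ⧸ Ideal.span {(N : R)}, addOrderOf P = N ∧
    Nat.card ↥(MulAction.orbit (R ⧸ Ideal.span {(N : R)})ˣ P) = Nat.totient N

/-!
It is enough to treat `N = m * n` with `m` and `n` coprime. By the Chinese remainder theorem
`R/NR ≃ R/mR × R/nR`, and both the additive order and the orbit size of a point are the products
of those of its components. An integer prime to `m` is a unit modulo `m`, so a point of additive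
order `m` in `R/mR` has the `φ(m)` distinct multiples by such integers in its orbit: its orbit
never has fewer than `φ(m)` elements. Since `φ(m * n) = φ(m) * φ(n)`, the product of the two orbit
sizes attains the lower bound exactly when each factor does.
-/

open MulAction

theorem orbit_units_map_mulEquiv {A B : Type*} [Monoid A] [Monoid B] (e : A ≃* B) (a : A) :
    orbit Bˣ (e a) = e '' orbit Aˣ a := by
  ext b
  constructor
  · rintro ⟨u, rfl⟩
    exact ⟨_, ⟨(Units.mapEquiv e).symm u, rfl⟩, by simp [Units.smul_def]⟩
  · rintro ⟨_, ⟨u, rfl⟩, rfl⟩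
    exact ⟨Units.mapEquiv e u, by simp [Units.smul_def]⟩

theorem orbit_units_prod {A B : Type*} [Monoid A] [Monoid B] (P : A × B) :
    orbit (A × B)ˣ P = orbit Aˣ P.1 ×ˢ orbit Bˣ P.2 := by
  ext Q
  constructor
  · rintro ⟨u, rfl⟩
    exact ⟨⟨(MulEquiv.prodUnits u).1, rfl⟩, ⟨(MulEquiv.prodUnits u).2, rfl⟩⟩
  · rintro ⟨⟨u, hu⟩, ⟨v, hv⟩⟩
    exact ⟨MulEquiv.prodUnits.symm (u, v), Prod.ext hu hv⟩

theorem natCard_orbit_units_prod {A B : Type*} [Monoid A] [Monoid B] (P : A × B) :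
    Nat.card (orbit (A × B)ˣ P) = Nat.card (orbit Aˣ P.1) * Nat.card (orbit Bˣ P.2) := by
  rw [orbit_units_prod, Nat.card_congr (Equiv.Set.prod _ _), Nat.card_prod]

theorem isUnit_natCast_of_coprime {A : Type*} [CommRing A] {n k : ℕ} (hn : (n : A) = 0)
    (hk : n.Coprime k) : IsUnit (k : A) := by
  have hcoprime : IsCoprime (n : A) (k : A) := hk.cast
  rwa [hn, isCoprime_zero_left] at hcoprime

theorem totient_addOrderOf_le_card_orbit {A M : Type*} [CommRing A] [AddCommMonoid M] [Module A M]
    {P : M} [Finite (orbit Aˣ P)] (hP : (addOrderOf P : A) = 0) :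
    (addOrderOf P).totient ≤ Nat.card (orbit Aˣ P) := by
  rw [Nat.totient_eq_card_coprime, Nat.card_coe_set_eq, ← Set.ncard_coe_finset]
  refine Set.ncard_le_ncard_of_injOn (· • P) (fun k hk ↦ ?_) (fun k hk l hl hkl ↦ ?_)
    (Set.toFinite _)
  · obtain ⟨u, hu⟩ := isUnit_natCast_of_coprime hP (Finset.mem_filter.mp hk).2
    exact ⟨u, by simp only [Units.smul_def, hu, Nat.cast_smul_eq_nsmul]⟩
  · exact nsmul_injOn_Iio_addOrderOf (Finset.mem_range.mp (Finset.mem_filter.mp hk).1)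
      (Finset.mem_range.mp (Finset.mem_filter.mp hl).1) hkl

theorem addOrderOf_prod_eq_mul_iff {A B : Type*} [AddMonoid A] [AddMonoid B] {m n : ℕ}
    (hmn : m.Coprime n) {P : A × B} (hm : addOrderOf P.1 ∣ m) (hn : addOrderOf P.2 ∣ n) :
    addOrderOf P = m * n ↔ addOrderOf P.1 = m ∧ addOrderOf P.2 = n := by
  rw [Prod.addOrderOf, (hmn.of_dvd hm hn).lcm_eq_mul]
  refine ⟨fun h ↦ ⟨hm.antisymm ?_, hn.antisymm ?_⟩, fun ⟨h₁, h₂⟩ ↦ by rw [h₁, h₂]⟩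
  · exact (hmn.of_dvd_right hn).dvd_of_dvd_mul_right (h ▸ dvd_mul_right m n)
  · exact (hmn.symm.of_dvd_right hm).dvd_of_dvd_mul_left (h ▸ dvd_mul_left n m)

/-- `P` has additive order `n` and its orbit under the units of the ring has `φ(n)` elements.
This is the property of a single point underlying `CartanH`, for a ring that need not be given
as a quotient, so that it can be moved along ring isomorphisms. -/
def HasTotientOrbit {A : Type*} [Semiring A] (n : ℕ) (P : A) : Prop :=
  addOrderOf P = n ∧ Nat.card (orbit Aˣ P) = n.totient

theorem hasTotientOrbit_map_ringEquiv {A B : Type*} [Semiring A] [Semiring B] (e : A ≃+* B)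
    {n : ℕ} {P : A} : HasTotientOrbit n (e P) ↔ HasTotientOrbit n P := by
  have horder : addOrderOf (e P) = addOrderOf P := e.toAddEquiv.addOrderOf_eq P
  have horbit : Nat.card (orbit Bˣ (e P)) = Nat.card (orbit Aˣ P) := by
    rw [← Nat.card_image_of_injective e.injective]
    exact congrArg (fun s : Set B ↦ Nat.card s) (orbit_units_map_mulEquiv e.toMulEquiv P)
  rw [HasTotientOrbit, HasTotientOrbit, horder, horbit]

theorem addOrderOf_dvd_of_natCast_eq_zero {A : Type*} [NonAssocSemiring A] {n : ℕ}
    (hn : (n : A) = 0) (P : A) : addOrderOf P ∣ n :=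
  addOrderOf_dvd_of_nsmul_eq_zero (by rw [nsmul_eq_mul, hn, zero_mul])

theorem hasTotientOrbit_prod_iff {A B : Type*} [CommRing A] [CommRing B] {m n : ℕ}
    (hm : m ≠ 0) (hn : n ≠ 0) (hmn : m.Coprime n) (hA : (m : A) = 0) (hB : (n : B) = 0)
    {P : A × B} :
    HasTotientOrbit (m * n) P ↔ HasTotientOrbit m P.1 ∧ HasTotientOrbit n P.2 := by
  rw [HasTotientOrbit, addOrderOf_prod_eq_mul_iff hmn (addOrderOf_dvd_of_natCast_eq_zero hA P.1)
    (addOrderOf_dvd_of_natCast_eq_zero hB P.2), natCard_orbit_units_prod, Nat.totient_mul hmn]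
  refine ⟨fun ⟨⟨hP₁, hP₂⟩, hcard⟩ ↦ ?_,
    fun ⟨⟨hP₁, hcard₁⟩, ⟨hP₂, hcard₂⟩⟩ ↦ ⟨⟨hP₁, hP₂⟩, by rw [hcard₁, hcard₂]⟩⟩
  have hφm : 0 < m.totient := Nat.totient_pos.mpr (Nat.pos_of_ne_zero hm)
  have hφn : 0 < n.totient := Nat.totient_pos.mpr (Nat.pos_of_ne_zero hn)
  obtain ⟨hne₁, hne₂⟩ := mul_ne_zero_iff.mp (hcard ▸ (mul_pos hφm hφn).ne')
  have : Finite (orbit Aˣ P.1) := Nat.finite_of_card_ne_zero hne₁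
  have : Finite (orbit Bˣ P.2) := Nat.finite_of_card_ne_zero hne₂
  have hle₁ : m.totient ≤ Nat.card (orbit Aˣ P.1) :=
    hP₁ ▸ totient_addOrderOf_le_card_orbit (hP₁.symm ▸ hA)
  have hle₂ : n.totient ≤ Nat.card (orbit Bˣ P.2) :=
    hP₂ ▸ totient_addOrderOf_le_card_orbit (hP₂.symm ▸ hB)
  obtain ⟨hcard₁, hcard₂⟩ :=
    (mul_eq_mul_iff_eq_and_eq_of_pos hle₁ hle₂ hφm (Nat.pos_of_ne_zero hne₂)).mp hcard.symm
  exact ⟨⟨hP₁, hcard₁.symm⟩, ⟨hP₂, hcard₂.symm⟩⟩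

theorem natCast_quotient_span_self {R : Type*} [CommRing R] (n : ℕ) :
    (n : R ⧸ Ideal.span {(n : R)}) = 0 := by
  rw [← map_natCast (Ideal.Quotient.mk _), Ideal.Quotient.eq_zero_iff_mem]
  exact Ideal.mem_span_singleton_self _

/-- The Chinese remainder isomorphism `R/mnR ≃ R/mR × R/nR` for coprime natural numbers
`m` and `n`. -/
noncomputable def quotientSpanMulEquivProd (R : Type*) [CommRing R] {m n : ℕ}
    (hmn : m.Coprime n) :
    (R ⧸ Ideal.span {((m * n : ℕ) : R)}) ≃+*
      (R ⧸ Ideal.span {(m : R)}) × (R ⧸ Ideal.span {(n : R)}) :=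
  (Ideal.quotEquivOfEq (by rw [Nat.cast_mul, Ideal.span_singleton_mul_span_singleton])).trans
    (Ideal.quotientMulEquivQuotientProd _ _
      ((Ideal.isCoprime_span_singleton_iff _ _).mpr hmn.cast))

theorem cartanH_mul_iff (R : Type*) [CommRing R] {m n : ℕ} (hm : m ≠ 0) (hn : n ≠ 0)
    (hmn : m.Coprime n) : CartanH R (m * n) ↔ CartanH R m ∧ CartanH R n :=
  calc CartanH R (m * n)
    _ ↔ ∃ P, HasTotientOrbit (m * n) (quotientSpanMulEquivProd R hmn P) :=
      exists_congr fun _ ↦ (hasTotientOrbit_map_ringEquiv _).symm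
    _ ↔ ∃ P : (R ⧸ Ideal.span {(m : R)}) × (R ⧸ Ideal.span {(n : R)}),
          HasTotientOrbit (m * n) P :=
      (quotientSpanMulEquivProd R hmn).surjective.exists.symm
    _ ↔ ∃ P : (R ⧸ Ideal.span {(m : R)}) × (R ⧸ Ideal.span {(n : R)}),
          HasTotientOrbit m P.1 ∧ HasTotientOrbit n P.2 :=
      exists_congr fun _ ↦ hasTotientOrbit_prod_iff hm hn hmn
        (natCast_quotient_span_self m) (natCast_quotient_span_self n)
    _ ↔ CartanH R m ∧ CartanH R n := Prod.exists.trans exists_and_exists_comm.symm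

theorem cartanH_one (R : Type*) [CommRing R] : CartanH R 1 := by
  have : Subsingleton (R ⧸ Ideal.span {((1 : ℕ) : R)}) := by
    rw [Ideal.Quotient.subsingleton_iff, Nat.cast_one, Ideal.span_singleton_one]
  refine ⟨0, addOrderOf_zero, ?_⟩
  rw [Nat.totient_one, Nat.card_eq_one_iff_unique]
  exact ⟨inferInstance, ⟨0, mem_orbit_self _⟩⟩

theorem iff_forall_primeFactors_of_coprime_mul {Q : ℕ → Prop} (one : Q 1)
    (mul : ∀ {m n : ℕ}, m ≠ 0 → n ≠ 0 → m.Coprime n → (Q (m * n) ↔ Q m ∧ Q n))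
    {N : ℕ} (hN : N ≠ 0) : Q N ↔ ∀ p ∈ N.primeFactors, Q (p ^ N.factorization p) := by
  induction N using Nat.recOnPosPrimePosCoprime with
  | zero => exact absurd rfl hN
  | one => simpa using one
  | prime_pow p k hp hk =>
    simp [Nat.primeFactors_prime_pow hk.ne' hp, hp.factorization_self]
  | coprime a b _ _ hab iha ihb =>
    obtain ⟨ha, hb⟩ := mul_ne_zero_iff.mp hN
    rw [mul ha hb hab, iha ha, ihb hb, hab.primeFactors_mul]
    simp only [Finset.mem_union, or_imp, forall_and]
    refine and_congr (forall₂_congr fun p hp ↦ ?_) (forall₂_congr fun p hp ↦ ?_)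
    · rw [Nat.factorization_eq_of_coprime_left hab
        (Nat.mem_primeFactors_iff_mem_primeFactorsList.mp hp)]
    · rw [Nat.factorization_eq_of_coprime_right hab
        (Nat.mem_primeFactors_iff_mem_primeFactorsList.mp hp)]

theorem cartanH_iff_prime_powers_general (R : Type*) [CommRing R] {N : ℕ} (hN : N ≠ 0) :
    CartanH R N ↔ ∀ p ∈ N.primeFactors, CartanH R (p ^ N.factorization p) :=
  iff_forall_primeFactors_of_coprime_mul (cartanH_one R) (cartanH_mul_iff R) hN

/-- For an order `O` in an imaginary quadratic field and
`N = ∏ ℓᵢ^{aᵢ}` a positive integer, `H(O,N)` holds iff `H(O,ℓᵢ^{aᵢ})` holds for all `i`. -/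
theorem cartanH_iff_prime_powers (K : Type*) [Field K] [NumberField K]
    (hK : IsImagQuadratic K) (f : ℕ) (hf : 0 < f)
    (O : Subalgebra ℤ K) (hO : IsOrderOfConductor K f O) (N : ℕ) (hN : 0 < N) :
    CartanH (↥O) N ↔ ∀ p ∈ N.primeFactors, CartanH (↥O) (p ^ N.factorization p) :=
  cartanH_iff_prime_powers_general O hN.ne'
end

section
/- Let O be an order of discriminant Δ in an imaginary quadratic field and let N be a positive integer. Then H(O,N) holds if and only if Δ is a square in ℤ/4Nℤ, i.e. if and only if there exists an integer s with s² ≡ Δ (mod 4N). -/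
set_option synthInstance.maxHeartbeats 1000000
set_option maxHeartbeats 1000000

open NumberField

/-!
An order of conductor `f` in a quadratic field of discriminant `Δ_K` is `ℤ[ω]` with
`ω² = a + bω` and `b² + 4a = f² Δ_K`. Put `A = ℤ/N` and `Q = A[ω]`. A point `P` of additive order
`N` spans a free `A`-line, on which `Aˣ` already has an orbit of size `φ(N)`; so the orbit of `P`
under `Qˣ` has size `φ(N)` exactly when every unit of `Q` acts on `P` by a scalar.

If `r² = a + br` in `A`, then `P = ω + r - b` is an eigenvector of all of `Q`. Conversely, suppose
that all units act on `P` by scalars. Where some `x + ω` is a unit, `ω` itself acts on `P` by a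
scalar, which is a root of `T² - bT - a`. The norm of `x + ω` is `x² + bx - a`, and on the
complementary factor of `A` its values at `0` and `1` are nilpotent, so `T² - bT - a` is
congruent to `T(T + 1)` modulo nilpotents and has a root by Newton's method. Completing the square
turns a root modulo `N` into a square root of `b² + 4a` modulo `4N`.
-/

section Roots

variable {A : Type*} [CommRing A]

lemma exists_sq_eq_add_mul_of_isNilpotent_of_isUnit {a b : A} (ha : IsNilpotent a)
    (hb : IsUnit b) : ∃ r : A, r ^ 2 = a + b * r := by
  let χ : Polynomial A := .X ^ 2 - .C b * .X - .C a
  obtain ⟨r, ⟨-, hr⟩, -⟩ := χ.existsUnique_nilpotent_sub_and_aeval_eq_zero (x := (0 : A))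
    (by simpa [χ] using ha) (by simpa [χ] using hb)
  have hχ : r ^ 2 - b * r - a = 0 := by simpa [χ] using hr
  exact ⟨r, by linear_combination hχ⟩

lemma exists_isIdempotentElem_dvd_and_isNilpotent_mul_one_sub [IsArtinianRing A] (z : A) :
    ∃ e : A, IsIdempotentElem e ∧ z ∣ e ∧ IsNilpotent (z * (1 - e)) := by
  obtain ⟨n, y, hy⟩ := IsArtinian.exists_pow_succ_smul_dvd (M := A) z 1
  replace hy : z ^ (n + 1) * y = z ^ n := by simpa using hy
  have hstep : z ^ (n + 1) * (z * y) = z ^ (n + 1) := by linear_combination z * hy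
  have hiter (k : ℕ) : z ^ (n + 1) * (z * y) ^ k = z ^ (n + 1) := by
    induction k with
    | zero => simp
    | succ k ih => rw [pow_succ' (z * y), ← mul_assoc, hstep, ih]
  have hz : z ^ (n + 1) * (z * y) ^ (n + 1) = z ^ (n + 1) := hiter (n + 1)
  have he : IsIdempotentElem ((z * y) ^ (n + 1)) := by
    rw [IsIdempotentElem]
    nth_rw 1 [mul_pow]
    rw [mul_right_comm, hz, mul_pow]
  refine ⟨(z * y) ^ (n + 1), he, (dvd_mul_right z y).trans (dvd_pow_self _ n.succ_ne_zero),
    n + 1, ?_⟩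
  rw [mul_pow, he.one_sub.pow_succ_eq, mul_sub, mul_one, hz, sub_self]

/- Take `x = 0` where `a` is invertible and `x = 1` where `a` is nilpotent: the value there is
`1 + b - a`, which is non-invertible only where `1 + b` is nilpotent too. -/
lemma exists_isIdempotentElem_sq_add_mul_sub_dvd [IsArtinianRing A] (a b : A) :
    ∃ x e : A, IsIdempotentElem e ∧ x ^ 2 + b * x - a ∣ e ∧
      IsNilpotent (a * (1 - e)) ∧ IsNilpotent ((1 + b) * (1 - e)) := by
  obtain ⟨d, hd, ⟨w, hw⟩, had⟩ := exists_isIdempotentElem_dvd_and_isNilpotent_mul_one_sub a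
  obtain ⟨e, he, hze, hz⟩ :=
    exists_isIdempotentElem_dvd_and_isNilpotent_mul_one_sub ((1 - d) ^ 2 + b * (1 - d) - a)
  have hd' : d * d = d := hd
  have ha : IsNilpotent (a * (1 - e)) := by
    have h := (Commute.all _ _).isNilpotent_sub
      ((Commute.all _ (1 - e)).isNilpotent_mul_right had)
      ((Commute.all _ d).isNilpotent_mul_right hz)
    convert h using 1
    linear_combination -(1 - e) * (1 + b - d) * hd'
  refine ⟨1 - d, e, he, hze, ha, ?_⟩
  have h := (Commute.all _ _).isNilpotent_add ((Commute.all _ _).isNilpotent_add hz ha)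
    ((Commute.all _ ((1 + b) * w)).isNilpotent_mul_right ha)
  convert h using 1
  linear_combination (1 - e) * (1 + b) * hw - (1 - e) * hd'

end Roots

section Orbits

variable {A Q : Type*} [CommSemiring A] [Semiring Q] [Algebra A Q]

lemma card_orbit_units_eq_card_units_iff [Finite A] {P : Q}
    (hP : Function.Injective fun c : A ↦ c • P) :
    Nat.card (MulAction.orbit Qˣ P) = Nat.card Aˣ ↔ ∀ u : Qˣ, ∃ c : A, u • P = c • P := by
  let scale (c : Aˣ) : MulAction.orbit Qˣ P :=
    ⟨Units.map (algebraMap A Q) c • P, MulAction.mem_orbit _ _⟩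
  have scale_val (c : Aˣ) : (scale c : Q) = (c : A) • P := by
    simp [scale, Units.smul_def, Algebra.smul_def]
  have scale_injective : Function.Injective scale := fun c d h ↦
    Units.ext (hP (by simpa only [scale_val] using congrArg Subtype.val h))
  constructor
  · intro hcard u
    have : Finite (MulAction.orbit Qˣ P) :=
      Nat.finite_of_card_ne_zero (hcard ▸ Nat.card_pos.ne')
    obtain ⟨c, hc⟩ := (scale_injective.bijective_of_nat_card_le hcard.le).surjective
      ⟨u • P, MulAction.mem_orbit _ _⟩
    exact ⟨c, by rw [← scale_val, hc]⟩
  · intro hscalar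
    refine (Nat.card_eq_of_bijective scale ⟨scale_injective, ?_⟩).symm
    rintro ⟨_, u, rfl⟩
    obtain ⟨c, hc⟩ := hscalar u
    obtain ⟨d, hd⟩ := hscalar u⁻¹
    have hcd : c * d = 1 := hP <| by
      calc (c * d) • P = u⁻¹ • u • P := by rw [hc, smul_comm, hd, mul_smul]
        _ = (1 : A) • P := by rw [inv_smul_smul, one_smul]
    exact ⟨.mkOfMulEqOne c d hcd, Subtype.ext ((scale_val _).trans hc.symm)⟩

end Orbits

section Eigenvectors

open QuadraticAlgebra

variable {A : Type*} [CommRing A] {a b : A}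

lemma exists_injective_smul_eigenvector_of_root {r : A} (hr : r ^ 2 = a + b * r) :
    ∃ P : QuadraticAlgebra A a b, Function.Injective (fun c : A ↦ c • P) ∧
      ∀ z : QuadraticAlgebra A a b, z * P = (z.re + z.im * r) • P := by
  refine ⟨⟨r - b, 1⟩, fun c d h ↦ ?_, fun z ↦ ?_⟩
  · simpa using congrArg QuadraticAlgebra.im h
  · ext
    · simp only [re_mul, re_smul, smul_eq_mul]
      linear_combination -z.im * hr
    · simp only [im_mul, im_smul, smul_eq_mul]
      ring

lemma mul_sq_sub_eq_zero_of_smul_omega_mul_eq_smul {P : QuadraticAlgebra A a b}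
    (hP : Function.Injective fun c : A ↦ c • P) {e s : A}
    (hs : e • (ω * P) = (e * s) • P) : e * (s ^ 2 - (a + b * s)) = 0 := by
  refine hP ?_
  have hω : (ω : QuadraticAlgebra A a b) * ω = algebraMap A _ a + algebraMap A _ b * ω := by
    rw [omega_mul_omega_eq_add, Algebra.algebraMap_eq_smul_one, ← Algebra.smul_def]
  simp only [Algebra.smul_def, map_mul, map_sub, map_add, map_pow, map_zero, zero_mul] at hs ⊢
  linear_combination algebraMap A _ e * P * hω + (algebraMap A _ b - ω - algebraMap A _ s) * hs

lemma exists_root_of_units_act_by_scalars [IsArtinianRing A] {P : QuadraticAlgebra A a b}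
    (hP : Function.Injective fun c : A ↦ c • P)
    (hscalar : ∀ u : (QuadraticAlgebra A a b)ˣ, ∃ c : A, u • P = c • P) :
    ∃ r : A, r ^ 2 = a + b * r := by
  obtain ⟨x, e, he, ⟨w, hw⟩, ha, hb⟩ := exists_isIdempotentElem_sq_add_mul_sub_dvd a b
  have he' : e * e = e := he
  -- The unit `e * (x + ω) + (1 - e)`: an eigenvector for it is one for `ω` on the factor `e`.
  have hunit : IsUnit (⟨e * x + (1 - e), e⟩ : QuadraticAlgebra A a b) := by
    refine isUnit_iff_norm_isUnit.mpr (.of_mul_eq_one (e * w + (1 - e)) ?_)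
    have hnorm : (⟨e * x + (1 - e), e⟩ : QuadraticAlgebra A a b).norm =
        e * (x ^ 2 + b * x - a) + (1 - e) := by
      rw [norm_def]
      linear_combination ((x - 1) ^ 2 + b * (x - 1) - a) * he'
    rw [hnorm]
    linear_combination (e + 2 - (x ^ 2 + b * x - a) - w) * he' - e ^ 2 * hw
  obtain ⟨c, hc⟩ := hscalar hunit.unit
  obtain ⟨s, hs⟩ : ∃ s, e * (s ^ 2 - (a + b * s)) = 0 := by
    refine ⟨c - x, mul_sq_sub_eq_zero_of_smul_omega_mul_eq_smul hP ?_⟩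
    have h : (⟨e * x + (1 - e), e⟩ : QuadraticAlgebra A a b) * P = c • P := hc
    have heQ := congrArg (algebraMap A (QuadraticAlgebra A a b)) he'
    simp only [mk_eq_add_smul_omega, Algebra.smul_def, map_mul, map_add, map_sub, map_one]
      at h heQ ⊢
    linear_combination algebraMap A _ e * h + (1 - algebraMap A _ x - ω) * P * heQ
  obtain ⟨r, hr⟩ : ∃ r : A, r ^ 2 = a * (1 - e) + ((1 + b) * (1 - e) - 1) * r :=
    exists_sq_eq_add_mul_of_isNilpotent_of_isUnit ha hb.isUnit_sub_one
  refine ⟨e * s + (1 - e) * r, ?_⟩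
  linear_combination hs + (1 - e) * hr + ((s - r) ^ 2 + r * (1 + b) + a) * he'

lemma exists_free_orbit_card_eq_card_units_iff_exists_root [Finite A] (a b : A) :
    (∃ P : QuadraticAlgebra A a b, Function.Injective (fun c : A ↦ c • P) ∧
      Nat.card (MulAction.orbit (QuadraticAlgebra A a b)ˣ P) = Nat.card Aˣ) ↔
      ∃ r : A, r ^ 2 = a + b * r := by
  constructor
  · rintro ⟨P, hP, hcard⟩
    exact exists_root_of_units_act_by_scalars hP ((card_orbit_units_eq_card_units_iff hP).mp hcard)
  · rintro ⟨r, hr⟩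
    obtain ⟨P, hP, hscalar⟩ := exists_injective_smul_eigenvector_of_root hr
    exact ⟨P, hP, (card_orbit_units_eq_card_units_iff hP).mpr fun u ↦ ⟨_, hscalar u⟩⟩

end Eigenvectors

section Reduction

open QuadraticAlgebra

lemma addOrderOf_eq_iff_injective_zmod_smul {N : ℕ} {M : Type*} [AddCommGroup M]
    [Module (ZMod N) M] (P : M) : addOrderOf P = N ↔ Function.Injective fun c : ZMod N ↦ c • P := by
  change _ ↔ Function.Injective (LinearMap.toSpanSingleton (ZMod N) M P)
  simp only [injective_iff_map_eq_zero, LinearMap.toSpanSingleton_apply,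
    ZMod.intCast_surjective.forall, Int.cast_smul_eq_zsmul, ← addOrderOf_dvd_iff_zsmul_eq_zero,
    ZMod.intCast_zmod_eq_zero_iff_dvd]
  refine ⟨fun h k hk ↦ h ▸ hk, fun h ↦ Nat.dvd_antisymm ?_ ?_⟩
  · rw [addOrderOf_dvd_iff_nsmul_eq_zero, ← Nat.cast_smul_eq_nsmul (ZMod N), ZMod.natCast_self,
      zero_smul]
  · exact_mod_cast h _ dvd_rfl

lemma exists_addOrderOf_card_orbit_iff_of_ringEquiv {Q Q' : Type*} [Semiring Q] [Semiring Q']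
    (φ : Q ≃+* Q') (m n : ℕ) :
    (∃ P : Q, addOrderOf P = m ∧ Nat.card (MulAction.orbit Qˣ P) = n) ↔
      ∃ P : Q', addOrderOf P = m ∧ Nat.card (MulAction.orbit Q'ˣ P) = n := by
  refine φ.toEquiv.exists_congr fun P ↦ ?_
  have horder : addOrderOf (φ P) = addOrderOf P :=
    addOrderOf_injective φ.toAddMonoidHom φ.injective P
  have horbit : MulAction.orbit Q'ˣ (φ P) = φ '' MulAction.orbit Qˣ P := by
    ext y
    simp only [MulAction.mem_orbit_iff, Set.mem_image, exists_exists_eq_and]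
    refine ((Units.mapEquiv φ.toMulEquiv).toEquiv.exists_congr fun u ↦ ?_).symm
    simp [Units.smul_def]
  have hcard : Nat.card (MulAction.orbit Q'ˣ (φ P)) = Nat.card (MulAction.orbit Qˣ P) := by
    rw [horbit, Nat.card_image_of_injective φ.injective]
  simp [horder, hcard]

/-- The change of coefficients of a quadratic algebra along a ring homomorphism `φ`; for
`φ : ℤ → ZMod N` it is reduction modulo `N`. -/
def quadraticAlgebraMap {A B : Type*} [CommSemiring A] [CommSemiring B] (φ : A →+* B) (a b : A) :
    QuadraticAlgebra A a b →+* QuadraticAlgebra B (φ a) (φ b) where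
  toFun z := ⟨φ z.re, φ z.im⟩
  map_one' := by ext <;> simp
  map_mul' z w := by ext <;> simp
  map_zero' := by ext <;> simp
  map_add' z w := by ext <;> simp

lemma quadraticAlgebraMap_surjective {A B : Type*} [CommSemiring A] [CommSemiring B] {φ : A →+* B}
    (hφ : Function.Surjective φ) (a b : A) :
    Function.Surjective (quadraticAlgebraMap φ a b) := by
  rintro ⟨x, y⟩
  obtain ⟨x, rfl⟩ := hφ x
  obtain ⟨y, rfl⟩ := hφ y
  exact ⟨⟨x, y⟩, rfl⟩

lemma ker_quadraticAlgebraMap {A B : Type*} [CommSemiring A] [CommSemiring B] {φ : A →+* B} {d : A}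
    (hφ : RingHom.ker φ = Ideal.span {d}) (a b : A) :
    RingHom.ker (quadraticAlgebraMap φ a b) = Ideal.span {algebraMap A _ d} := by
  ext z
  have hdvd (x : A) : φ x = 0 ↔ d ∣ x := by
    rw [← RingHom.mem_ker, hφ, Ideal.mem_span_singleton]
  rw [RingHom.mem_ker, Ideal.mem_span_singleton, algebraMap_dvd_iff, ← hdvd, ← hdvd]
  exact QuadraticAlgebra.ext_iff

lemma cartanH_iff_of_ringEquiv_quadraticAlgebra {R : Type*} [CommRing R] {a b : ℤ}
    (φ : R ≃+* QuadraticAlgebra ℤ a b) (N : ℕ) :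
    CartanH R N ↔ ∃ P : QuadraticAlgebra (ZMod N) a b, addOrderOf P = N ∧
      Nat.card (MulAction.orbit (QuadraticAlgebra (ZMod N) a b)ˣ P) = N.totient := by
  let π : QuadraticAlgebra ℤ a b →+* QuadraticAlgebra (ZMod N) a b :=
    quadraticAlgebraMap (Int.castRingHom (ZMod N)) a b
  have hπ : Function.Surjective π := quadraticAlgebraMap_surjective ZMod.intCast_surjective a b
  have hker : RingHom.ker π = Ideal.span {algebraMap ℤ _ N} :=
    ker_quadraticAlgebraMap (ZMod.ker_intCastRingHom N) a b
  have hquot : Ideal.span {algebraMap ℤ (QuadraticAlgebra ℤ a b) N} =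
      (Ideal.span {(N : R)}).map φ := by
    simp [Ideal.map_span]
  exact exists_addOrderOf_card_orbit_iff_of_ringEquiv
    ((Ideal.quotientEquiv _ _ φ (hker.trans hquot)).trans
      (RingHom.quotientKerEquivOfSurjective hπ)) N N.totient

lemma exists_zmod_root_iff_exists_sq_modEq (a b : ℤ) (N : ℕ) :
    (∃ r : ZMod N, r ^ 2 = a + b * r) ↔ ∃ s : ℤ, s ^ 2 ≡ b ^ 2 + 4 * a [ZMOD 4 * N] := by
  have hroot : (∃ r : ZMod N, r ^ 2 = a + b * r) ↔ ∃ r : ℤ, (N : ℤ) ∣ a + b * r - r ^ 2 := by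
    simp_rw [ZMod.intCast_surjective.exists, ← Int.modEq_iff_dvd, ← ZMod.intCast_eq_intCast_iff]
    push_cast
    rfl
  have hcomplete (r : ℤ) : b ^ 2 + 4 * a - (2 * r - b) ^ 2 = 4 * (a + b * r - r ^ 2) := by ring
  simp only [hroot, Int.modEq_iff_dvd]
  constructor
  · rintro ⟨r, hr⟩
    exact ⟨2 * r - b, by rw [hcomplete]; exact mul_dvd_mul_left 4 hr⟩
  · rintro ⟨s, hs⟩
    have hparity : Even (s + b) := by
      have h : Even (b ^ 2 + 4 * a - s ^ 2) :=
        even_iff_two_dvd.mpr ((Dvd.intro _ (by ring : 2 * (2 * (N : ℤ)) = 4 * N)).trans hs)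
      have hfour : Even (4 : ℤ) := by decide
      simpa [hfour, iff_comm, parity_simps] using h
    obtain ⟨r, hr⟩ := hparity
    obtain rfl : s = 2 * r - b := by linarith
    rw [hcomplete] at hs
    exact ⟨r, (mul_dvd_mul_iff_left four_ne_zero).mp hs⟩

lemma cartanH_iff_exists_sq_modEq {R : Type*} [CommRing R] {a b : ℤ}
    (φ : R ≃+* QuadraticAlgebra ℤ a b) {N : ℕ} (hN : 0 < N) :
    CartanH R N ↔ ∃ s : ℤ, s ^ 2 ≡ b ^ 2 + 4 * a [ZMOD 4 * N] := by
  have : NeZero N := ⟨hN.ne'⟩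
  have htotient : N.totient = Nat.card (ZMod N)ˣ := by
    rw [Nat.card_eq_fintype_card, ZMod.card_units_eq_totient]
  rw [cartanH_iff_of_ringEquiv_quadraticAlgebra φ, ← exists_zmod_root_iff_exists_sq_modEq,
    ← exists_free_orbit_card_eq_card_units_iff_exists_root, htotient]
  simp only [addOrderOf_eq_iff_injective_zmod_smul]

end Reduction

section QuadraticRings

open Module QuadraticAlgebra

variable {A R : Type*} [CommRing A] [Ring R] [Algebra A R]

lemma exists_basis_zero_eq_one (β : Basis (Fin 2) A R) : ∃ β' : Basis (Fin 2) A R, β' 0 = 1 := by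
  have hone : β.repr 1 0 • β 0 + β.repr 1 1 • β 1 = 1 := by
    rw [← Fin.sum_univ_two fun i ↦ β.repr 1 i • β i, β.sum_repr]
  obtain ⟨u, v, huv⟩ : IsCoprime (β.repr 1 0) (β.repr 1 1) := by
    -- Compare the coefficients of `β 0` in `1 * β 0 = β 0`.
    refine ⟨β.repr (β 0 * β 0) 0, β.repr (β 1 * β 0) 0, ?_⟩
    have h := congrArg (fun r ↦ β.repr (r * β 0) 0) hone
    simp only [add_mul, smul_mul_assoc, one_mul, map_add, map_smul, Finsupp.add_apply,
      Finsupp.smul_apply, smul_eq_mul, Basis.repr_self, Finsupp.single_eq_same] at h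
    linear_combination h
  let γ : Fin 2 → R := ![1, u • β 1 - v • β 0]
  have hdet : β.det γ = 1 := by
    rw [Basis.det_apply, Matrix.det_fin_two]
    simpa [γ, Basis.toMatrix_apply, mul_comm] using huv
  obtain ⟨hli, hspan⟩ := (Basis.is_basis_iff_det β).mpr (hdet ▸ isUnit_one : IsUnit (β.det γ))
  exact ⟨.mk hli hspan.ge, by simp [γ]⟩

lemma quadraticAlgebra_basis_zero (a b : A) : QuadraticAlgebra.basis a b 0 = 1 := by
  ext <;> simp [QuadraticAlgebra.basis]

lemma quadraticAlgebra_basis_one (a b : A) : QuadraticAlgebra.basis a b 1 = ω := by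
  ext <;> simp [QuadraticAlgebra.basis]

lemma exists_algEquiv_quadraticAlgebra (β : Basis (Fin 2) A R) :
    ∃ a b : A, Nonempty (R ≃ₐ[A] QuadraticAlgebra A a b) := by
  obtain ⟨β, hβ⟩ := exists_basis_zero_eq_one β
  have hexpand (r : R) : r = β.repr r 0 • 1 + β.repr r 1 • β 1 := by
    rw [← hβ, ← Fin.sum_univ_two fun i ↦ β.repr r i • β i, β.sum_repr]
  let ψ : QuadraticAlgebra A (β.repr (β 1 * β 1) 0) (β.repr (β 1 * β 1) 1) →ₐ[A] R :=
    lift ⟨β 1, hexpand (β 1 * β 1)⟩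
  have hψ : ψ.toLinearMap = ((basis _ _).equiv β (.refl _)).toLinearMap := by
    refine (basis _ _).ext fun i ↦ ?_
    simp only [LinearEquiv.coe_coe, Basis.equiv_apply, Equiv.refl_apply]
    fin_cases i <;> simp [ψ, hβ, quadraticAlgebra_basis_zero, quadraticAlgebra_basis_one]
  have hbij : Function.Bijective ψ.toLinearMap := hψ ▸ LinearEquiv.bijective _
  exact ⟨_, _, ⟨(AlgEquiv.ofBijective ψ hbij).symm⟩⟩

lemma algebra_trace_eq_quadraticAlgebra_trace {a b : A} (z : QuadraticAlgebra A a b) :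
    Algebra.trace A _ z = z.trace := by
  rw [Algebra.trace_eq_matrix_trace (basis a b), Matrix.trace_fin_two]
  simp only [Algebra.leftMulMatrix_eq_repr_mul, quadraticAlgebra_basis_zero,
    quadraticAlgebra_basis_one, basis_repr_apply, trace_def]
  simp [two_mul, add_assoc]

lemma discr_quadraticAlgebra_basis (a b : A) :
    Algebra.discr A (basis a b) = b ^ 2 + 4 * a := by
  simp only [Algebra.discr_def, Matrix.det_fin_two, Algebra.traceMatrix_apply,
    Algebra.traceForm_apply, algebra_trace_eq_quadraticAlgebra_trace, trace_def,
    quadraticAlgebra_basis_zero, quadraticAlgebra_basis_one, re_mul, im_mul, re_one, im_one,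
    omega_re, omega_im]
  ring

end QuadraticRings

section Orders

variable {K : Type*} [Field K] [NumberField K]

lemma exists_ringOfIntegers_algEquiv_quadraticAlgebra (hK : Module.finrank ℚ K = 2) :
    ∃ a b : ℤ, Nonempty (𝓞 K ≃ₐ[ℤ] QuadraticAlgebra ℤ a b) ∧ discr K = b ^ 2 + 4 * a := by
  have hrank : Module.finrank ℤ (𝓞 K) = 2 := by rw [RingOfIntegers.rank, hK]
  obtain ⟨a, b, ⟨φ⟩⟩ :=
    exists_algEquiv_quadraticAlgebra (Module.finBasisOfFinrankEq ℤ (𝓞 K) hrank)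
  refine ⟨a, b, ⟨φ⟩, ?_⟩
  rw [← discr_eq_discr K ((QuadraticAlgebra.basis a b).map φ.symm.toLinearEquiv),
    ← discr_quadraticAlgebra_basis]
  exact (Algebra.discr_eq_discr_of_algEquiv (QuadraticAlgebra.basis a b) φ.symm).symm

open QuadraticAlgebra in
lemma IsOrderOfConductor.nonempty_ringEquiv_quadraticAlgebra {f : ℕ} (hf : 0 < f)
    {O : Subalgebra ℤ K} (hO : IsOrderOfConductor K f O) {a b : ℤ}
    (φ : 𝓞 K ≃ₐ[ℤ] QuadraticAlgebra ℤ a b) :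
    Nonempty (O ≃+* QuadraticAlgebra ℤ (f ^ 2 * a) (f * b)) := by
  let incl : QuadraticAlgebra ℤ (f ^ 2 * a) (f * b) →ₐ[ℤ] QuadraticAlgebra ℤ a b :=
    lift ⟨⟨0, f⟩, by ext <;> simp [sq, mul_left_comm, mul_comm]⟩
  have hincl (z) : incl z = ⟨z.re, f * z.im⟩ := by
    ext <;> simp [incl, mul_comm]
  let ι : QuadraticAlgebra ℤ (f ^ 2 * a) (f * b) →ₐ[ℤ] K :=
    (IsScalarTower.toAlgHom ℤ (𝓞 K) K).comp (φ.symm.toAlgHom.comp incl)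
  have hι : Function.Injective ι := by
    refine (FaithfulSMul.algebraMap_injective (𝓞 K) K).comp (φ.symm.injective.comp fun z w h ↦ ?_)
    simpa [hincl, QuadraticAlgebra.ext_iff, hf.ne'] using h
  have hrange : ι.range = O := by
    have hι_apply (z) : ι z = algebraMap (𝓞 K) K (φ.symm (incl z)) := rfl
    ext x
    rw [hO, AlgHom.mem_range]
    constructor
    · rintro ⟨z, rfl⟩
      refine ⟨z.re, φ.symm ⟨0, z.im⟩, ?_⟩
      have h : incl z = z.re + f * ⟨0, z.im⟩ := by ext <;> simp [hincl]
      simp only [hι_apply, h, map_add, map_mul, map_intCast, map_natCast]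
    · rintro ⟨c, y, rfl⟩
      refine ⟨⟨c + f * (φ y).re, (φ y).im⟩, ?_⟩
      have h : incl ⟨c + f * (φ y).re, (φ y).im⟩ = c + f * φ y := by ext <;> simp [hincl]
      simp only [hι_apply, h, map_add, map_mul, map_intCast, map_natCast, φ.symm_apply_apply]
  exact ⟨((AlgEquiv.ofInjective ι hι).trans (Subalgebra.equivOfEq _ _ hrange)).symm.toRingEquiv⟩

end Orders

theorem cartanH_iff_disc_square_general (K : Type*) [Field K] [NumberField K]
    (hK : Module.finrank ℚ K = 2) (f : ℕ) (hf : 0 < f)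
    (O : Subalgebra ℤ K) (hO : IsOrderOfConductor K f O) (N : ℕ) (hN : 0 < N) :
    CartanH O N ↔ ∃ s : ℤ, s ^ 2 ≡ (f : ℤ) ^ 2 * discr K [ZMOD 4 * N] := by
  obtain ⟨a, b, ⟨φ⟩, hdiscr⟩ := exists_ringOfIntegers_algEquiv_quadraticAlgebra hK
  obtain ⟨ψ⟩ := hO.nonempty_ringEquiv_quadraticAlgebra hf φ
  have hΔ : (f * b : ℤ) ^ 2 + 4 * (f ^ 2 * a) = f ^ 2 * discr K := by rw [hdiscr]; ring
  rw [cartanH_iff_exists_sq_modEq ψ hN, hΔ]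

/-- For the order `O` of conductor `f`, with discriminant
`Δ = f² Δ_K` (where `Δ_K = discr K`), and a positive integer `N`: `H(O,N)` holds iff
`Δ` is a square modulo `4N`. -/
theorem cartanH_iff_disc_square (K : Type*) [Field K] [NumberField K]
    (hK : IsImagQuadratic K) (f : ℕ) (hf : 0 < f)
    (O : Subalgebra ℤ K) (hO : IsOrderOfConductor K f O) (N : ℕ) (hN : 0 < N) :
    CartanH (↥O) N ↔
      ∃ s : ℤ, s ^ 2 ≡ (f : ℤ) ^ 2 * NumberField.discr K [ZMOD (4 * (N : ℤ))] :=
  cartanH_iff_disc_square_general K hK.1 f hf O hO N hN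
end

section
/- Let O be an order in an imaginary quadratic field and let N be a positive integer. The following are equivalent: (i) C_N(O) = (O/NO)^× acts simply transitively on the set of elements of O/NO of additive order N; (ii) C_N(O) acts transitively on the set of elements of O/NO of additive order N; (iii) every prime ℓ dividing N is inert in O (i.e. O/ℓO is a field). -/
set_option synthInstance.maxHeartbeats 1000000
set_option maxHeartbeats 1000000

open NumberField

/-!
An order `R` is integral over `ℤ`, so no prime is invertible in it and `1` has additive order `N` in
`R ⧸ (N)`. Hence the units act transitively on the elements of order `N` exactly when all these
elements are units, and in that case the action is simply transitive.
When `N` is not a zero divisor, the class of `x` has order `N` iff no prime `p ∣ N` divides `x`,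
and it is a unit iff `x` is coprime to every prime `p ∣ N`; for inert `p` these conditions agree.
Conversely, given `ℓ ∣ N` and `x` not divisible by `ℓ`, the Chinese remainder theorem yields
`y ≡ x` mod `ℓ` with `y ≡ 1` modulo the other primes dividing `N`. Its class has order `N`, so it
is a unit, and `x` is invertible mod `ℓ`.
-/

section UnitsAction

variable {M : Type*} [Monoid M]

theorem existsUnique_units_smul_eq {a b : M} (ha : IsUnit a) (hb : IsUnit b) :
    ∃! g : Mˣ, g • a = b := by
  obtain ⟨u, rfl⟩ := ha
  obtain ⟨v, rfl⟩ := hb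
  refine ⟨v * u⁻¹, by simp [Units.smul_def], fun g hg ↦ ?_⟩
  rw [eq_mul_inv_iff_mul_eq]
  exact Units.ext hg

theorem forall_exists_units_smul_eq_iff_forall_isUnit {S : M → Prop} (one_mem : S 1) :
    (∀ a b, S a → S b → ∃ g : Mˣ, g • a = b) ↔ ∀ a, S a → IsUnit a := by
  refine ⟨fun h a ha ↦ ?_, fun h a b ha hb ↦
    (existsUnique_units_smul_eq (h a ha) (h b hb)).exists⟩
  obtain ⟨g, hg⟩ := h 1 a one_mem ha
  exact ⟨g, by simpa [Units.smul_def] using hg⟩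

theorem forall_existsUnique_units_smul_eq_iff_forall_isUnit {S : M → Prop} (one_mem : S 1) :
    (∀ a b, S a → S b → ∃! g : Mˣ, g • a = b) ↔ ∀ a, S a → IsUnit a :=
  ⟨fun h ↦ (forall_exists_units_smul_eq_iff_forall_isUnit one_mem).1
    fun a b ha hb ↦ (h a b ha hb).exists,
    fun h a b ha hb ↦ existsUnique_units_smul_eq (h a ha) (h b hb)⟩

end UnitsAction

section CommRing

variable {R : Type*} [CommRing R]

theorem isUnit_quotient_mk_span_singleton_iff {a x : R} :
    IsUnit (Ideal.Quotient.mk (Ideal.span {a}) x) ↔ IsCoprime x a := by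
  rw [isUnit_iff_exists_inv, Ideal.Quotient.mk_surjective.exists]
  refine exists_congr fun y ↦ ?_
  rw [← map_mul, ← map_one (Ideal.Quotient.mk _), eq_comm, Ideal.Quotient.eq,
    Ideal.mem_span_singleton]
  exact ⟨fun ⟨c, hc⟩ ↦ ⟨c, by linear_combination -hc⟩,
    fun ⟨c, hc⟩ ↦ ⟨c, by linear_combination -hc⟩⟩

theorem isCoprime_natCast_of_forall_prime {N : ℕ} (hN : N ≠ 0) {x : R}
    (h : ∀ p : ℕ, p.Prime → p ∣ N → IsCoprime x (p : R)) : IsCoprime x (N : R) := by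
  rw [← Nat.prod_factorization_pow_eq_self hN, Finsupp.prod, Nat.cast_prod]
  refine IsCoprime.prod_right fun p hp ↦ ?_
  rw [Nat.cast_pow]
  exact (h p (Nat.prime_of_mem_primeFactors hp) (Nat.dvd_of_mem_primeFactors hp)).pow_right

theorem nsmul_quotient_mk_span_singleton_eq_zero_iff {a x : R} {n : ℕ} :
    n • Ideal.Quotient.mk (Ideal.span {a}) x = 0 ↔ a ∣ n * x := by
  rw [← map_nsmul, nsmul_eq_mul, Ideal.Quotient.eq_zero_iff_dvd]

theorem addOrderOf_quotient_mk_span_natCast_eq_iff {N : ℕ} (hN₀ : N ≠ 0)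
    (hN : (N : R) ∈ nonZeroDivisors R) {x : R} :
    addOrderOf (Ideal.Quotient.mk (Ideal.span {(N : R)}) x) = N ↔
      ∀ p : ℕ, p.Prime → p ∣ N → ¬(p : R) ∣ x := by
  constructor
  · rintro horder p hp ⟨m, rfl⟩ ⟨y, rfl⟩
    have hm : 0 < m := Nat.pos_of_ne_zero (right_ne_zero_of_mul hN₀)
    have hdvd : p * m ∣ m := horder ▸ addOrderOf_dvd_of_nsmul_eq_zero
      (nsmul_quotient_mk_span_singleton_eq_zero_iff.2 ⟨y, by push_cast; ring⟩)
    exact Nat.not_dvd_of_pos_of_lt hm (lt_mul_of_one_lt_left hm hp.one_lt) hdvd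
  · intro hx
    refine addOrderOf_eq_of_nsmul_and_div_prime_nsmul (Nat.pos_of_ne_zero hN₀)
      (nsmul_quotient_mk_span_singleton_eq_zero_iff.2 (dvd_mul_right _ _)) fun p hp hpN hzero ↦ ?_
    obtain ⟨m, rfl⟩ := hpN
    rw [Nat.mul_div_cancel_left m hp.pos, nsmul_quotient_mk_span_singleton_eq_zero_iff,
      Nat.cast_mul, mul_comm (p : R)] at hzero
    rw [Nat.cast_mul, mul_mem_nonZeroDivisors] at hN
    exact hx p hp (dvd_mul_right p m) ((dvd_cancel_left_mem_nonZeroDivisors hN.2).1 hzero)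

theorem inertIn_iff {ℓ : ℕ} :
    InertIn R ℓ ↔ ¬IsUnit (ℓ : R) ∧ ∀ x : R, ¬(ℓ : R) ∣ x → IsCoprime x (ℓ : R) := by
  have exists_ne_iff : (∃ a b : R ⧸ Ideal.span {(ℓ : R)}, a ≠ b) ↔ ¬IsUnit (ℓ : R) := by
    rw [← nontrivial_iff, Ideal.Quotient.nontrivial_iff, Ne, Ideal.span_singleton_eq_top]
  have inverses_iff : (∀ {a : R ⧸ Ideal.span {(ℓ : R)}}, a ≠ 0 → ∃ b, a * b = 1) ↔
      ∀ x : R, ¬(ℓ : R) ∣ x → IsCoprime x (ℓ : R) := by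
    simp only [← isUnit_iff_exists_inv, Ideal.Quotient.mk_surjective.forall,
      isUnit_quotient_mk_span_singleton_iff, Ne, Ideal.Quotient.eq_zero_iff_dvd]
  rw [← exists_ne_iff, ← inverses_iff]
  exact ⟨fun h ↦ ⟨h.exists_pair_ne, h.mul_inv_cancel⟩, fun h ↦ ⟨h.1, mul_comm, h.2⟩⟩

theorem exists_dvd_sub_and_forall_prime_ne_dvd_sub_one {N ℓ : ℕ} (hN : N ≠ 0) (hℓ : ℓ.Prime)
    (x : R) : ∃ y : R, (ℓ : R) ∣ y - x ∧
      ∀ p : ℕ, p.Prime → p ∣ N → p ≠ ℓ → (p : R) ∣ y - 1 := by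
  obtain ⟨k, m, hm, rfl⟩ := Nat.exists_eq_pow_mul_and_not_dvd hN ℓ hℓ.ne_one
  obtain ⟨u, v, huv⟩ : IsCoprime (m : R) (ℓ : R) :=
    ((hℓ.coprime_iff_not_dvd.2 hm).symm).cast
  refine ⟨u * m * x + v * ℓ, ⟨v * (1 - x), by linear_combination x * huv⟩,
    fun p hp hpN hne ↦ ?_⟩
  have hpm : p ∣ m := (hp.dvd_mul.1 hpN).resolve_left fun hpow ↦
    hne ((Nat.prime_dvd_prime_iff_eq hp hℓ).1 (hp.dvd_of_dvd_pow hpow))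
  exact (Nat.cast_dvd_cast hpm).trans ⟨u * (x - 1), by linear_combination huv⟩

theorem forall_isCoprime_natCast_iff_forall_inertIn {N : ℕ} (hN : N ≠ 0)
    (hunit : ∀ p : ℕ, p.Prime → p ∣ N → ¬IsUnit (p : R)) :
    (∀ x : R, (∀ p : ℕ, p.Prime → p ∣ N → ¬(p : R) ∣ x) → IsCoprime x (N : R)) ↔
      ∀ ℓ : ℕ, ℓ.Prime → ℓ ∣ N → InertIn R ℓ := by
  refine ⟨fun h ℓ hℓ hℓN ↦ inertIn_iff.2 ⟨hunit ℓ hℓ hℓN, fun x hx ↦ ?_⟩,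
    fun h x hx ↦ isCoprime_natCast_of_forall_prime hN fun p hp hpN ↦
      (inertIn_iff.1 (h p hp hpN)).2 x (hx p hp hpN)⟩
  obtain ⟨y, hyx, hy1⟩ := exists_dvd_sub_and_forall_prime_ne_dvd_sub_one hN hℓ x
  have hy : ∀ p : ℕ, p.Prime → p ∣ N → ¬(p : R) ∣ y := by
    intro p hp hpN hpy
    obtain rfl | hne := eq_or_ne p ℓ
    · exact hx ((dvd_iff_dvd_of_dvd_sub hyx).1 hpy)
    · exact hunit p hp hpN
        (isUnit_of_dvd_one ((dvd_iff_dvd_of_dvd_sub (hy1 p hp hpN hne)).1 hpy))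
  have hyℓ : IsCoprime y (ℓ : R) := (h y hy).of_isCoprime_of_dvd_right (Nat.cast_dvd_cast hℓN)
  obtain ⟨c, hc⟩ := hyx
  rw [sub_eq_iff_eq_add] at hc
  exact IsCoprime.of_mul_add_left_left (hc ▸ hyℓ)

theorem not_isUnit_natCast_of_prime [CharZero R] [Algebra.IsIntegral ℤ R] {p : ℕ}
    (hp : p.Prime) : ¬IsUnit (p : R) := by
  intro h
  have hmap : IsUnit (algebraMap ℤ R p) := by simpa using h
  exact (Nat.prime_iff_prime_int.1 hp).not_isUnit
    (isUnit_of_map_unit (algebraMap ℤ R) _ hmap)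

theorem transitive_iff_inert_general {N : ℕ} (hN : (N : R) ∈ nonZeroDivisors R)
    (hunit : ∀ p : ℕ, p.Prime → p ∣ N → ¬IsUnit (p : R)) :
    ((∀ P Q : R ⧸ Ideal.span {(N : R)}, addOrderOf P = N → addOrderOf Q = N →
        ∃! g : (R ⧸ Ideal.span {(N : R)})ˣ, g • P = Q) ↔
      (∀ P Q : R ⧸ Ideal.span {(N : R)}, addOrderOf P = N → addOrderOf Q = N →
        ∃ g : (R ⧸ Ideal.span {(N : R)})ˣ, g • P = Q)) ∧
    ((∀ P Q : R ⧸ Ideal.span {(N : R)}, addOrderOf P = N → addOrderOf Q = N →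
        ∃ g : (R ⧸ Ideal.span {(N : R)})ˣ, g • P = Q) ↔
      (∀ ℓ : ℕ, ℓ.Prime → ℓ ∣ N → InertIn R ℓ)) := by
  have hN₀ : N ≠ 0 := by
    rintro rfl
    have : Subsingleton R := subsingleton_of_zero_eq_one
      (mem_nonZeroDivisors_iff_right.1 hN 1 (by simp)).symm
    exact hunit 2 Nat.prime_two (dvd_zero 2) (isUnit_of_subsingleton _)
  have addOrderOf_one : addOrderOf (1 : R ⧸ Ideal.span {(N : R)}) = N :=
    (addOrderOf_quotient_mk_span_natCast_eq_iff hN₀ hN).2 fun p hp hpN hdvd ↦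
      hunit p hp hpN (isUnit_of_dvd_one hdvd)
  rw [forall_existsUnique_units_smul_eq_iff_forall_isUnit addOrderOf_one,
    forall_exists_units_smul_eq_iff_forall_isUnit addOrderOf_one,
    ← forall_isCoprime_natCast_iff_forall_inertIn hN₀ hunit]
  simp only [Ideal.Quotient.mk_surjective.forall, isUnit_quotient_mk_span_singleton_iff,
    addOrderOf_quotient_mk_span_natCast_eq_iff hN₀ hN, and_self]

end CommRing

theorem IsOrderOfConductor.isIntegral {K : Type*} [Field K] [NumberField K] {f : ℕ}
    {O : Subalgebra ℤ K} (hO : IsOrderOfConductor K f O) : Algebra.IsIntegral ℤ O := by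
  refine O.isIntegral_iff.2 fun x hx ↦ ?_
  obtain ⟨a, y, rfl⟩ := (hO x).1 hx
  exact RingOfIntegers.isIntegral_coe (a + f * y : 𝓞 K)

/-- For an order `O` in an imaginary quadratic field and `N ≥ 1` TFAE:
(i) `(O/NO)ˣ` acts simply transitively on the elements of additive order `N`;
(ii) it acts transitively on them; (iii) every prime `ℓ ∣ N` is inert in `O`. -/
theorem transitive_iff_inert (K : Type*) [Field K] [NumberField K]
    (hK : IsImagQuadratic K) (f : ℕ) (hf : 0 < f)
    (O : Subalgebra ℤ K) (hO : IsOrderOfConductor K f O) (N : ℕ) (hN : 0 < N) :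
    ((∀ P Q : ↥O ⧸ Ideal.span {(N : ↥O)}, addOrderOf P = N → addOrderOf Q = N →
        ∃! g : (↥O ⧸ Ideal.span {(N : ↥O)})ˣ, g • P = Q) ↔
      (∀ P Q : ↥O ⧸ Ideal.span {(N : ↥O)}, addOrderOf P = N → addOrderOf Q = N →
        ∃ g : (↥O ⧸ Ideal.span {(N : ↥O)})ˣ, g • P = Q)) ∧
    ((∀ P Q : ↥O ⧸ Ideal.span {(N : ↥O)}, addOrderOf P = N → addOrderOf Q = N →
        ∃ g : (↥O ⧸ Ideal.span {(N : ↥O)})ˣ, g • P = Q) ↔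
      (∀ ℓ : ℕ, ℓ.Prime → ℓ ∣ N → InertIn (↥O) ℓ)) := by
  have := hO.isIntegral
  exact transitive_iff_inert_general
    (mem_nonZeroDivisors_of_ne_zero (Nat.cast_ne_zero.2 hN.ne'))
    fun p hp _ ↦ not_isUnit_natCast_of_prime hp
end

section
/- Let O be an order of discriminant Δ in an imaginary quadratic field, let N ≥ 3 be an integer, and assume (Δ, N) ≠ (−3, 3) (i.e. it is not the case that N = 3 and O is the ring ℤ[ζ₃] of Eisenstein integers). Let P ∈ O/NO be an element of additive order N and let I_P = {x ∈ O : xP = 0}. Then the natural map O^× → (O/I_P)^× is injective; consequently the orbit of P under C_N(O) = (O/NO)^× has cardinality equal to #O^× times the cardinality of the orbit of the reduced Cartan subgroup C_N(O)/q_N(O^×) acting on the set of O^×-orbits in O/NO, at the O^×-orbit of P (here q_N : O^× → (O/NO)^× is the natural map). -/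
set_option synthInstance.maxHeartbeats 1000000
set_option maxHeartbeats 1000000

open NumberField

/-! An element `x` fixed by a primitive `n`-th root of unity `ζ` is killed by `Φₙ(1)`, because
`Φₙ(ζ) = 0`; and `Φₙ(1)` is `p` when `n > 1` is a power of a prime `p`, and `1` when `n` is not a
prime power. A unit `u ≠ 1` of an imaginary quadratic order is a root of unity of order `n > 1` with
`φ(n) ≤ 2`. If it fixes `P ≠ 0`, then some prime `p ∣ n` satisfies `p • P = 0`, and `p ≤ 3` because
`p - 1 ∣ φ(n)`. When `p = 3`, the order contains a primitive cube root of unity, hence is the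
ring of Eisenstein integers. Outside of these cases the units act freely on the Cartan orbit of `P`,
which therefore falls into pieces of size `#O^×`. -/

section Orbits

open MulAction

variable {G H X : Type*} [Group G] [Group H] [MulAction G X] [MulAction H X]

theorem card_subMulAction_eq_card_mul_card_image_mk (S : SubMulAction G X)
    (hS : ∀ x ∈ S, stabilizer G x = ⊥) :
    Nat.card S = Nat.card G * Nat.card (Quotient.mk (orbitRel G X) '' S) := by
  have orbitRel_coe_iff (x y : S) : orbitRel G S x y ↔ orbitRel G X x y := by
    rw [SubMulAction.orbitRel_of_subMul]
    rfl
  let toImage : Quotient (orbitRel G S) → Quotient.mk (orbitRel G X) '' S :=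
    Quotient.lift (fun x ↦ ⟨Quotient.mk _ (x : X), x, x.2, rfl⟩) fun x y hxy ↦
      Subtype.ext (Quotient.sound ((orbitRel_coe_iff x y).1 hxy))
  have toImage_bijective : Function.Bijective toImage := by
    constructor
    · rintro ⟨x⟩ ⟨y⟩ hxy
      exact Quotient.sound ((orbitRel_coe_iff x y).2 (Quotient.exact (Subtype.ext_iff.1 hxy)))
    · rintro ⟨_, x, hx, rfl⟩
      exact ⟨Quotient.mk _ ⟨x, hx⟩, rfl⟩
  have hfree (x : S) : stabilizer G x = ⊥ := by
    rw [SubMulAction.stabilizer_of_subMul, hS x x.2]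
  rw [Nat.card_congr (selfEquivOrbitsQuotientProd hfree), Nat.card_prod,
    Nat.card_eq_of_bijective toImage toImage_bijective, mul_comm]

theorem card_orbit_eq_card_mul_card_image_mk [SMulCommClass H G X] {x : X}
    (hmem : ∀ h : H, h • x ∈ orbit G x) (hx : stabilizer H x = ⊥) :
    Nat.card (orbit G x) = Nat.card H * Nat.card (Quotient.mk (orbitRel H X) '' orbit G x) := by
  let S : SubMulAction H X :=
    { carrier := orbit G x
      smul_mem' := by
        rintro h _ ⟨g, rfl⟩
        rw [smul_comm]
        exact mem_orbit_of_mem_orbit g (hmem h) }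
  refine card_subMulAction_eq_card_mul_card_image_mk S ?_
  rintro _ ⟨g, rfl⟩
  rw [stabilizer_smul_eq_right, hx]

end Orbits

section Stabilizers

variable {R M A : Type*} [CommRing R] [AddCommGroup M] [Module R M] [CommRing A] [Algebra R A]

theorem units_map_mk_torsionOf_injective {x : M} (hx : MulAction.stabilizer Rˣ x = ⊥) :
    Function.Injective (Units.map (Ideal.Quotient.mk (Ideal.torsionOf R M x)).toMonoidHom) := by
  intro u v huv
  have hmk : Ideal.Quotient.mk (Ideal.torsionOf R M x) u = Ideal.Quotient.mk _ (v : R) :=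
    congrArg Units.val huv
  have hsmul : u • x = v • x := by
    rwa [Ideal.Quotient.eq, Ideal.mem_torsionOf_iff, sub_smul, sub_eq_zero] at hmk
  have hmem : v⁻¹ * u ∈ MulAction.stabilizer Rˣ x := by
    rw [MulAction.mem_stabilizer_iff, mul_smul, hsmul, inv_smul_smul]
  rw [hx, Subgroup.mem_bot, inv_mul_eq_one] at hmem
  exact hmem.symm

theorem card_units_orbit_eq_card_mul_card_image_mk {x : A}
    (hx : MulAction.stabilizer Rˣ x = ⊥) :
    Nat.card (MulAction.orbit Aˣ x) =
      Nat.card Rˣ * Nat.card (Quotient.mk (MulAction.orbitRel Rˣ A) '' MulAction.orbit Aˣ x) :=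
  card_orbit_eq_card_mul_card_image_mk
    (fun u ↦ ⟨Units.map (algebraMap R A).toMonoidHom u, algebraMap_smul A (u : R) x⟩) hx

theorem eval_smul_eq_eval_one_smul {r : R} {x : M} (hx : r • x = x) (p : Polynomial R) :
    p.eval r • x = p.eval 1 • x := by
  obtain ⟨c, hc⟩ := Polynomial.sub_dvd_eval_sub r 1 p
  rw [← sub_eq_zero, ← sub_smul, hc, mul_comm, mul_smul, sub_smul, hx, one_smul, sub_self,
    smul_zero]

theorem exists_prime_nsmul_eq_zero_of_isPrimitiveRoot [IsDomain R] {ζ : R} {n : ℕ}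
    (hζ : IsPrimitiveRoot ζ n) (hn : 1 < n) {x : M} (hx : ζ • x = x) (hx0 : x ≠ 0) :
    ∃ p : ℕ, p.Prime ∧ p ∣ n ∧ p • x = 0 := by
  have heval : (Polynomial.cyclotomic n R).eval 1 • x = 0 := by
    rw [← eval_smul_eq_eval_one_smul hx, hζ.isRoot_cyclotomic (zero_lt_one.trans hn), zero_smul]
  by_cases hpow : ∃ p k : ℕ, p.Prime ∧ p ^ k = n
  · obtain ⟨p, k, hp, rfl⟩ := hpow
    obtain ⟨k, rfl⟩ : ∃ j, k = j + 1 :=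
      Nat.exists_eq_succ_of_ne_zero fun hk ↦ hn.ne' (by rw [hk, pow_zero])
    have := Fact.mk hp
    rw [Polynomial.eval_one_cyclotomic_prime_pow, Nat.cast_smul_eq_nsmul] at heval
    exact ⟨p, hp, dvd_pow_self p k.succ_ne_zero, heval⟩
  · rw [Polynomial.eval_one_cyclotomic_not_prime_pow (fun hp k hk ↦ hpow ⟨_, k, hp, hk⟩),
      one_smul] at heval
    exact absurd heval hx0

end Stabilizers

theorem isUnit_of_algebraMap_dvd_gen_sub {R S : Type*} [CommRing R] [CommRing S] [Algebra R S]
    (B : PowerBasis R S) (hB : 1 < B.dim) {r a : R}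
    (h : algebraMap R S r ∣ B.gen - algebraMap R S a) : IsUnit r := by
  obtain ⟨y, hy⟩ := h
  have hgen : B.gen = B.basis ⟨1, hB⟩ := by rw [B.basis_eq_pow, pow_one]
  have hconst : algebraMap R S a = a • B.basis ⟨0, zero_lt_one.trans hB⟩ := by
    rw [B.basis_eq_pow, pow_zero, Algebra.algebraMap_eq_smul_one]
  have hcoord : B.basis.repr (B.gen - algebraMap R S a) ⟨1, hB⟩ = 1 := by
    simp [hgen, hconst, -PowerBasis.coe_basis]
  refine IsUnit.of_mul_eq_one (B.basis.repr y ⟨1, hB⟩) ?_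
  rw [← hcoord, hy, ← Algebra.smul_def, map_smul, Finsupp.smul_apply, smul_eq_mul]

section Cyclotomic

variable {K : Type*} [Field K] [NumberField K] {ζ : K} {n : ℕ}

theorem totient_le_finrank_of_isPrimitiveRoot [NeZero n] (hζ : IsPrimitiveRoot ζ n) :
    n.totient ≤ Module.finrank ℚ K := by
  rw [← Polynomial.natDegree_cyclotomic n ℚ,
    Polynomial.cyclotomic_eq_minpoly_rat hζ (NeZero.pos n)]
  exact minpoly.natDegree_le ζ

theorem isCyclotomicExtension_of_finrank_eq_totient [NeZero n] (hζ : IsPrimitiveRoot ζ n)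
    (hn : Module.finrank ℚ K = n.totient) : IsCyclotomicExtension {n} ℚ K := by
  have hadjoin := hζ.intermediateField_adjoin_isCyclotomicExtension ℚ
  have htop : IntermediateField.adjoin ℚ {ζ} = ⊤ := by
    rw [Field.primitive_element_iff_minpoly_natDegree_eq, hn,
      ← Polynomial.cyclotomic_eq_minpoly_rat hζ (NeZero.pos n), Polynomial.natDegree_cyclotomic]
  rw [htop] at hadjoin
  exact IsCyclotomicExtension.equiv {n} ℚ _ IntermediateField.topEquiv

end Cyclotomic

namespace IsOrderOfConductor

variable {K : Type*} [Field K] [NumberField K] {f : ℕ} {O : Subalgebra ℤ K}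

theorem isIntegral_s13 (hO : IsOrderOfConductor K f O) (x : O) : IsIntegral ℤ (x : K) := by
  obtain ⟨a, y, hxy⟩ := (hO x).1 x.2
  rw [hxy]
  exact (isIntegral_intCast a).add ((isIntegral_natCast f).mul y.isIntegral_coe)

theorem conductor_eq_one {n : ℕ} (hO : IsOrderOfConductor K f O) (hn : 2 < n)
    [IsCyclotomicExtension {n} ℚ K] {ζ : O} (hζ : IsPrimitiveRoot (ζ : K) n) : f = 1 := by
  have : NeZero n := ⟨by omega⟩
  obtain ⟨a, y, hζy⟩ := (hO ζ).1 ζ.2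
  have hdvd : algebraMap ℤ (𝓞 K) f ∣ hζ.integralPowerBasis.gen - algebraMap ℤ (𝓞 K) a := by
    refine ⟨y, RingOfIntegers.ext ?_⟩
    have hcoe : algebraMap (𝓞 K) K hζ.toInteger = a + f * algebraMap (𝓞 K) K y := hζy
    simp [hcoe]
  have hdim : 1 < hζ.integralPowerBasis.dim := by
    rw [hζ.integralPowerBasis_dim]
    have hpos := Nat.totient_pos.2 (NeZero.pos n)
    have hne : n.totient ≠ 1 := by
      rw [Ne, Nat.totient_eq_one_iff]
      omega
    omega
  exact Nat.isUnit_iff.1 (Int.ofNat_isUnit.1 (isUnit_of_algebraMap_dvd_gen_sub _ hdim hdvd))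

theorem sq_mul_discr_eq_neg_three (hO : IsOrderOfConductor K f O) (hK : Module.finrank ℚ K = 2)
    {ζ : O} (hζ : IsPrimitiveRoot ζ 3) : (f : ℤ) ^ 2 * discr K = -3 := by
  have hζK : IsPrimitiveRoot (ζ : K) 3 := hζ.map_of_injective (f := O.val) Subtype.val_injective
  have := isCyclotomicExtension_of_finrank_eq_totient hζK
    (by rw [hK, Nat.totient_prime Nat.prime_three])
  have := Fact.mk Nat.prime_three
  rw [hO.conductor_eq_one (by norm_num) hζK, IsCyclotomicExtension.Rat.discr_prime 3 K]
  norm_num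

end IsOrderOfConductor

theorem torsion_eq_top_of_rank_eq_zero (K : Type*) [Field K] [NumberField K]
    (hK : Units.rank K = 0) : Units.torsion K = ⊤ := by
  have : IsEmpty (Fin (Units.rank K)) := by rw [hK]; infer_instance
  rw [← Units.closure_fundSystem_sup_torsion_eq_top K, Set.range_eq_empty, Subgroup.closure_empty,
    bot_sup_eq]

theorem isOfFinOrder_units_of_rank_eq_zero {K : Type*} [Field K] [NumberField K]
    (hK : Units.rank K = 0) {O : Subalgebra ℤ K} (hO : ∀ x : O, IsIntegral ℤ (x : K)) (u : Oˣ) :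
    IsOfFinOrder u := by
  let ι : O →+* 𝓞 K := O.val.toRingHom.codRestrict _ hO
  have hι : Function.Injective (Units.map ι.toMonoidHom) :=
    Units.map_injective fun x y hxy ↦ Subtype.ext (congrArg (algebraMap (𝓞 K) K) hxy)
  have hmem : Units.map ι.toMonoidHom u ∈ Units.torsion K := by
    rw [torsion_eq_top_of_rank_eq_zero K hK]
    trivial
  exact hι.isOfFinOrder_iff.1 hmem

namespace IsImagQuadratic

variable {K : Type*} [Field K] [NumberField K]

theorem isTotallyComplex (hK : IsImagQuadratic K) : IsTotallyComplex K where
  isComplex v := by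
    rw [← InfinitePlace.not_isReal_iff_isComplex]
    rintro ⟨φ, hφ, -⟩
    exact hK.2.false hφ.embedding

theorem rank_eq_zero (hK : IsImagQuadratic K) : Units.rank K = 0 := by
  have := hK.isTotallyComplex
  have hfinrank := IsTotallyComplex.finrank (K := K)
  have hcard := InfinitePlace.card_eq_nrRealPlaces_add_nrComplexPlaces (K := K)
  rw [IsTotallyComplex.nrRealPlaces_eq_zero] at hcard
  rw [hK.1] at hfinrank
  rw [Units.rank]
  omega

theorem stabilizer_units_eq_bot (hK : IsImagQuadratic K) {f : ℕ} {O : Subalgebra ℤ K}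
    (hO : IsOrderOfConductor K f O) {M : Type*} [AddCommGroup M] [Module O M] {P : M}
    (hP : 2 • P ≠ 0) (hexc : ¬ ((f : ℤ) ^ 2 * discr K = -3 ∧ 3 • P = 0)) :
    MulAction.stabilizer Oˣ P = ⊥ := by
  rw [Subgroup.eq_bot_iff_forall]
  intro u hu
  have hfin : IsOfFinOrder u := isOfFinOrder_units_of_rank_eq_zero hK.rank_eq_zero hO.isIntegral_s13 u
  have hprim : IsPrimitiveRoot (u : O) (orderOf u) :=
    IsPrimitiveRoot.coe_units_iff.2 (IsPrimitiveRoot.orderOf u)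
  by_contra hne
  have hone_lt : 1 < orderOf u :=
    lt_of_le_of_ne hfin.orderOf_pos fun h ↦ hne (orderOf_eq_one_iff.1 h.symm)
  obtain ⟨p, hp, ⟨m, hpm⟩, hpP⟩ := exists_prime_nsmul_eq_zero_of_isPrimitiveRoot hprim hone_lt hu
    (by rintro rfl; exact hP (smul_zero 2))
  have hprim_p : IsPrimitiveRoot ((u : O) ^ m) p :=
    hprim.pow hfin.orderOf_pos (hpm.trans (mul_comm p m))
  have hp_le : p - 1 ≤ 2 := by
    have : NeZero p := ⟨hp.ne_zero⟩
    rw [← Nat.totient_prime hp, ← hK.1]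
    exact totient_le_finrank_of_isPrimitiveRoot
      (hprim_p.map_of_injective (f := O.val) Subtype.val_injective)
  obtain rfl | rfl : p = 2 ∨ p = 3 := by
    have := hp.two_le
    omega
  · exact hP hpP
  · exact hexc ⟨hO.sq_mul_discr_eq_neg_three hK.1 hprim_p, hpP⟩

end IsImagQuadratic

theorem reduced_cartan_orbit_size_general {K : Type*} [Field K] [NumberField K]
    (hK : IsImagQuadratic K) {f : ℕ} {O : Subalgebra ℤ K} (hO : IsOrderOfConductor K f O)
    {A : Type*} [CommRing A] [Algebra O A] {P : A} (hP : 2 • P ≠ 0)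
    (hexc : ¬ ((f : ℤ) ^ 2 * discr K = -3 ∧ 3 • P = 0)) :
    Function.Injective (Units.map (Ideal.Quotient.mk (Ideal.torsionOf O A P)).toMonoidHom) ∧
    Nat.card (MulAction.orbit Aˣ P) =
      Nat.card Oˣ *
        Nat.card (Quotient.mk (MulAction.orbitRel Oˣ A) '' MulAction.orbit Aˣ P) := by
  have hstab : MulAction.stabilizer Oˣ P = ⊥ := hK.stabilizer_units_eq_bot hO hP hexc
  exact ⟨units_map_mk_torsionOf_injective hstab, card_units_orbit_eq_card_mul_card_image_mk hstab⟩

/-- Let `O` be an order of discriminant `Δ = f²Δ_K` in an imaginary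
quadratic field, `N ≥ 3` with `(Δ,N) ≠ (-3,3)`, `P ∈ O/NO` of additive order `N` with
annihilator `I_P`.  Then `O^× → (O/I_P)^×` is injective; consequently the Cartan orbit of
`P` has cardinality `#O^×` times the cardinality of the orbit of the reduced Cartan group
at the `O^×`-orbit of `P`, the latter being the image of the Cartan orbit of `P` in the
set of `O^×`-orbits of `O/NO`. -/
theorem reduced_cartan_orbit_size (K : Type*) [Field K] [NumberField K]
    (hK : IsImagQuadratic K) (f : ℕ) (hf : 0 < f)
    (O : Subalgebra ℤ K) (hO : IsOrderOfConductor K f O) (N : ℕ) (hN : 3 ≤ N)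
    (hexc : ¬ ((f : ℤ) ^ 2 * NumberField.discr K = -3 ∧ N = 3))
    (P : ↥O ⧸ Ideal.span {(N : ↥O)}) (hP : addOrderOf P = N)
    (IP : Ideal ↥O) (hIP : ∀ x : ↥O, x ∈ IP ↔ x • P = 0) :
    Function.Injective (Units.map (Ideal.Quotient.mk IP).toMonoidHom : (↥O)ˣ → (↥O ⧸ IP)ˣ) ∧
    Nat.card ↥(MulAction.orbit (↥O ⧸ Ideal.span {(N : ↥O)})ˣ P) =
      Nat.card (↥O)ˣ *
        Nat.card ↥((fun x => Quotient.mk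
            (MulAction.orbitRel (↥O)ˣ (↥O ⧸ Ideal.span {(N : ↥O)})) x) ''
          (MulAction.orbit (↥O ⧸ Ideal.span {(N : ↥O)})ˣ P)) := by
  obtain rfl : IP = Ideal.torsionOf O _ P := Ideal.ext hIP
  refine reduced_cartan_orbit_size_general hK hO (fun h ↦ ?_) fun h ↦ hexc ⟨h.1, ?_⟩
  · have := Nat.le_of_dvd two_pos (hP ▸ addOrderOf_dvd_of_nsmul_eq_zero h)
    omega
  · exact (Nat.le_of_dvd three_pos (hP ▸ addOrderOf_dvd_of_nsmul_eq_zero h.2)).antisymm hN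
end
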